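/- Let C ∈ RH∞^{n×n} be real-rational and γ > 0. Then the following are equivalent: (i) [P,C] is stable for every strictly negative imaginary (SNI) P ∈ RH∞^{n×n} satisfying P(0) ≤ γI; (ii) [P,C] is stable for every SNI P ∈ RH∞^{n×n} satisfying 0 ≤ P(0) ≤ γI; (iii) C is negative imaginary (NI), C(∞) ≥ 0 (positive semidefinite), and C(0) < (1/γ)I. -/

import Mathlib

open Matrix Polynomial Filter Topology
open scoped ComplexOrder

noncomputable section

namespace NIControl

/-- Evaluate a real-rational function at a complex point (junk value at poles). -/
def evalC (f : RatFunc ℝ) (s : ℂ) : ℂ :=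
  f.eval (algebraMap ℝ ℂ) s

/-- `s` is a pole of the real-rational function `f`
(the reduced denominator vanishes at `s`). -/
def IsPoleAt (f : RatFunc ℝ) (s : ℂ) : Prop :=
  f.denom.eval₂ (algebraMap ℝ ℂ) s = 0

variable {n : ℕ}

/-- Pointwise evaluation of a real-rational transfer matrix at a complex point. -/
def evalM (G : Matrix (Fin n) (Fin n) (RatFunc ℝ)) (s : ℂ) : Matrix (Fin n) (Fin n) ℂ :=
  Matrix.of fun i j => evalC (G i j) s

/-- Pointwise evaluation of a real-rational transfer matrix at a real point. -/
def evalR (G : Matrix (Fin n) (Fin n) (RatFunc ℝ)) (x : ℝ) : Matrix (Fin n) (Fin n) ℝ :=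
  Matrix.of fun i j => (G i j).eval (RingHom.id ℝ) x

/-- Value at `s = ∞` of a proper real-rational function. -/
def atInfinity (f : RatFunc ℝ) : ℝ :=
  if f.num.degree = f.denom.degree then f.num.leadingCoeff / f.denom.leadingCoeff else 0

/-- The instantaneous gain `G(∞)` of a proper real-rational transfer matrix. -/
def evalInf (G : Matrix (Fin n) (Fin n) (RatFunc ℝ)) : Matrix (Fin n) (Fin n) ℝ :=
  Matrix.of fun i j => atInfinity (G i j)

/-- The matrix `G` has a pole at `s`. -/
def HasPole (G : Matrix (Fin n) (Fin n) (RatFunc ℝ)) (s : ℂ) : Prop :=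
  ∃ i j, IsPoleAt (G i j) s

/-- All entries of `G` are proper rational functions. -/
def Proper (G : Matrix (Fin n) (Fin n) (RatFunc ℝ)) : Prop :=
  ∀ i j, (G i j).num.degree ≤ (G i j).denom.degree

/-- All entries of `G` are strictly proper rational functions. -/
def StrictlyProper (G : Matrix (Fin n) (Fin n) (RatFunc ℝ)) : Prop :=
  ∀ i j, (G i j).num.degree < (G i j).denom.degree

/-- The pole of `G` at the origin (if any) is at most simple. -/
def NoDoubleOriginPole (G : Matrix (Fin n) (Fin n) (RatFunc ℝ)) : Prop :=
  ∀ i j, (G i j).denom.rootMultiplicity 0 ≤ 1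

/-- Membership in `RH∞`: proper and no poles in the closed right-half complex plane. -/
def MemRHinf {m : Type*} [Fintype m] (G : Matrix m m (RatFunc ℝ)) : Prop :=
  (∀ i j, (G i j).num.degree ≤ (G i j).denom.degree) ∧
  ∀ s : ℂ, 0 ≤ s.re → ∀ i j, ¬ IsPoleAt (G i j) s

/-- The point `jω` on the imaginary axis. -/
def jw (ω : ℝ) : ℂ := Complex.I * (ω : ℂ)

/-- The negative-imaginary frequency kernel `j (M − M*)`. -/
def niKer (M : Matrix (Fin n) (Fin n) ℂ) : Matrix (Fin n) (Fin n) ℂ :=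
  Complex.I • (M - Mᴴ)

/-- Negative imaginary (NI) real-rational transfer matrix. -/
def IsNI (G : Matrix (Fin n) (Fin n) (RatFunc ℝ)) : Prop :=
  Proper G ∧
  (∀ s : ℂ, 0 < s.re → ¬ HasPole G s) ∧
  (∀ ω : ℝ, 0 < ω → ¬ HasPole G (jw ω) → (niKer (evalM G (jw ω))).PosSemidef) ∧
  (∀ ω : ℝ, 0 < ω → HasPole G (jw ω) →
    ∃ R : Matrix (Fin n) (Fin n) ℂ, R.PosSemidef ∧
      Tendsto (fun s : ℂ => (s - jw ω) • Complex.I • evalM G s) (𝓝[≠] jw ω) (𝓝 R)) ∧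
  (HasPole G 0 →
    (∀ k : ℕ, 3 ≤ k → Tendsto (fun s : ℂ => s ^ k • evalM G s) (𝓝[≠] 0) (𝓝 0)) ∧
    ∃ R : Matrix (Fin n) (Fin n) ℂ, R.PosSemidef ∧
      Tendsto (fun s : ℂ => s ^ 2 • evalM G s) (𝓝[≠] 0) (𝓝 R))

/-- Strictly negative imaginary (SNI) real-rational transfer matrix. -/
def IsSNI (G : Matrix (Fin n) (Fin n) (RatFunc ℝ)) : Prop :=
  MemRHinf G ∧ ∀ ω : ℝ, 0 < ω → (niKer (evalM G (jw ω))).PosDef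

/-- Positive real (passive) real-rational transfer matrix. -/
def IsPositiveReal (G : Matrix (Fin n) (Fin n) (RatFunc ℝ)) : Prop :=
  MemRHinf G ∧ ∀ ω : ℝ, 0 ≤ ω → (evalM G (jw ω) + (evalM G (jw ω))ᴴ).PosSemidef

/-- Output strictly passive real-rational transfer matrix. -/
def IsOSP (G : Matrix (Fin n) (Fin n) (RatFunc ℝ)) : Prop :=
  MemRHinf G ∧ ∃ ε : ℝ, 0 < ε ∧ ∀ ω : ℝ, 0 ≤ ω →
    (evalM G (jw ω) + (evalM G (jw ω))ᴴ -
      (ε : ℂ) • ((evalM G (jw ω))ᴴ * evalM G (jw ω))).PosSemidef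

/-- Stability of the positive feedback interconnection `[P, C]`:
`[I; C] (I − P C)⁻¹ [I, P] ∈ RH∞`. -/
def FeedbackStable (P C : Matrix (Fin n) (Fin n) (RatFunc ℝ)) : Prop :=
  ((1 : Matrix (Fin n) (Fin n) (RatFunc ℝ)) - P * C).det ≠ 0 ∧
  MemRHinf (Matrix.fromBlocks
    (1 - P * C)⁻¹ ((1 - P * C)⁻¹ * P)
    (C * (1 - P * C)⁻¹) (C * (1 - P * C)⁻¹ * P))

/-- All eigenvalues of the complex matrix `M` are real and less than `c`. -/
def eigsRealAndLT (M : Matrix (Fin n) (Fin n) ℂ) (c : ℝ) : Prop :=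
  ∀ μ ∈ spectrum ℂ M, μ.im = 0 ∧ μ.re < c

/-- The (real) eigenvalues of the real matrix `M` are all real and its largest
eigenvalue is less than `c`. -/
def maxEigLT (M : Matrix (Fin n) (Fin n) ℝ) (c : ℝ) : Prop :=
  eigsRealAndLT (M.map (Complex.ofReal)) c

/-- Loewner order `A ≤ B` on real matrices. -/
def LoewnerLE (A B : Matrix (Fin n) (Fin n) ℝ) : Prop := (B - A).PosSemidef

/-- Strict Loewner order `A < B` on real matrices. -/
def LoewnerLT (A B : Matrix (Fin n) (Fin n) ℝ) : Prop := (B - A).PosDef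


/-! ### The ring of stable proper real-rational functions -/

/-- scalar membership in RH∞ -/
def RHs (f : RatFunc ℝ) : Prop :=
  f.num.degree ≤ f.denom.degree ∧ ∀ s : ℂ, 0 ≤ s.re → ¬ IsPoleAt f s

lemma frac_rel (f : RatFunc ℝ) (p q : ℝ[X]) (hq : q ≠ 0)
    (hf : f = algebraMap ℝ[X] (RatFunc ℝ) p / algebraMap ℝ[X] (RatFunc ℝ) q) :
    f.num * q = p * f.denom := (RatFunc.num_mul_eq_mul_denom_iff hq).2 hf

lemma RHs_mk (f : RatFunc ℝ) (p q : ℝ[X]) (hq : q ≠ 0) (hd : p.degree ≤ q.degree)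
    (hs : ∀ s : ℂ, 0 ≤ s.re → q.eval₂ (algebraMap ℝ ℂ) s ≠ 0)
    (hf : f = algebraMap ℝ[X] (RatFunc ℝ) p / algebraMap ℝ[X] (RatFunc ℝ) q) : RHs f := by
  have h := frac_rel f p q hq hf
  refine ⟨?_, fun s hs0 hp => hs s hs0 ?_⟩
  · have h2 := congrArg Polynomial.degree h
    rw [degree_mul, degree_mul] at h2
    by_contra hlt
    push Not at hlt
    have hqb : q.degree ≠ ⊥ := by simpa [degree_eq_bot] using hq
    have : p.degree + f.denom.degree < f.num.degree + q.degree := by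
      calc p.degree + f.denom.degree ≤ q.degree + f.denom.degree := by gcongr
        _ = f.denom.degree + q.degree := add_comm _ _
        _ < f.num.degree + q.degree := WithBot.add_lt_add_right hqb hlt
    exact absurd h2 (ne_of_gt this)
  · have : f.denom ∣ q := by rw [hf]; exact RatFunc.denom_div_dvd p q
    obtain ⟨r, rfl⟩ := this
    rw [eval₂_mul]
    rw [show f.denom.eval₂ (algebraMap ℝ ℂ) s = 0 from hp, zero_mul]

lemma evalC_mk (f : RatFunc ℝ) (p q : ℝ[X]) (hq : q ≠ 0) (s : ℂ)
    (hs : q.eval₂ (algebraMap ℝ ℂ) s ≠ 0)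
    (hf : f = algebraMap ℝ[X] (RatFunc ℝ) p / algebraMap ℝ[X] (RatFunc ℝ) q) :
    evalC f s = p.eval₂ (algebraMap ℝ ℂ) s / q.eval₂ (algebraMap ℝ ℂ) s := by
  have h := frac_rel f p q hq hf
  have hd : f.denom.eval₂ (algebraMap ℝ ℂ) s ≠ 0 := by
    intro h0
    have : f.denom ∣ q := by rw [hf]; exact RatFunc.denom_div_dvd p q
    obtain ⟨r, hr⟩ := this
    apply hs; rw [hr, eval₂_mul, h0, zero_mul]
  have h2 := congrArg (fun r => Polynomial.eval₂ (algebraMap ℝ ℂ) s r) h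
  simp only [eval₂_mul] at h2
  unfold evalC RatFunc.eval
  rw [div_eq_div_iff hd hs, h2]

lemma am_ne (q : ℝ[X]) (hq : q ≠ 0) : algebraMap ℝ[X] (RatFunc ℝ) q ≠ 0 := by
  simpa using hq

lemma rep (f : RatFunc ℝ) :
    f = algebraMap ℝ[X] (RatFunc ℝ) f.num / algebraMap ℝ[X] (RatFunc ℝ) f.denom :=
  (RatFunc.num_div_denom f).symm

lemma RHs_add {f g : RatFunc ℝ} (hf : RHs f) (hg : RHs g) : RHs (f + g) := by
  refine RHs_mk _ (f.num * g.denom + g.num * f.denom) (f.denom * g.denom)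
    (mul_ne_zero f.denom_ne_zero g.denom_ne_zero) ?_ ?_ ?_
  · refine (degree_add_le _ _).trans (max_le ?_ ?_)
    · rw [degree_mul, degree_mul]; gcongr; exact hf.1
    · rw [degree_mul, degree_mul, add_comm]; gcongr; exact hg.1
  · intro s hs
    rw [eval₂_mul]
    exact mul_ne_zero (hf.2 s hs) (hg.2 s hs)
  · have h1 := am_ne _ f.denom_ne_zero
    have h2 := am_ne _ g.denom_ne_zero
    conv_lhs => rw [rep f, rep g]
    rw [div_add_div _ _ h1 h2]
    simp only [map_add, map_mul]
    ring

lemma RHs_mul {f g : RatFunc ℝ} (hf : RHs f) (hg : RHs g) : RHs (f * g) := by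
  refine RHs_mk _ (f.num * g.num) (f.denom * g.denom)
    (mul_ne_zero f.denom_ne_zero g.denom_ne_zero) ?_ ?_ ?_
  · rw [degree_mul, degree_mul]; exact add_le_add hf.1 hg.1
  · intro s hs
    rw [eval₂_mul]
    exact mul_ne_zero (hf.2 s hs) (hg.2 s hs)
  · conv_lhs => rw [rep f, rep g]
    rw [div_mul_div_comm]
    simp only [map_mul]

lemma RHs_neg {f : RatFunc ℝ} (hf : RHs f) : RHs (-f) := by
  refine RHs_mk _ (-f.num) f.denom f.denom_ne_zero (by rw [degree_neg]; exact hf.1) hf.2 ?_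
  conv_lhs => rw [rep f]
  rw [map_neg, neg_div]

lemma RHs_C (c : ℝ) : RHs (RatFunc.C c) := by
  refine RHs_mk _ (Polynomial.C c) 1 one_ne_zero ?_ ?_ ?_
  · rw [degree_one]; exact degree_C_le
  · intro s _; simp
  · simp

/-- The subring of stable proper rational functions. -/
def RH : Subring (RatFunc ℝ) where
  carrier := {f | RHs f}
  mul_mem' := fun hf hg => RHs_mul hf hg
  one_mem' := by simpa using RHs_C 1
  add_mem' := fun hf hg => RHs_add hf hg
  zero_mem' := by simpa using RHs_C 0
  neg_mem' := fun hf => RHs_neg hf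

lemma RH_pole (f : RH) {s : ℂ} (hs : 0 ≤ s.re) : (f : RatFunc ℝ).denom.eval₂ (algebraMap ℝ ℂ) s ≠ 0 :=
  f.2.2 s hs

/-- Evaluation at a point of the closed right-half plane. -/
def ev (s : ℂ) (hs : 0 ≤ s.re) : RH →+* ℂ where
  toFun f := evalC f s
  map_one' := by simp [evalC]
  map_zero' := by simp [evalC]
  map_mul' f g := by
    exact RatFunc.eval_mul (algebraMap ℝ ℂ) s (RH_pole f hs) (RH_pole g hs)
  map_add' f g := by
    exact RatFunc.eval_add (algebraMap ℝ ℂ) s (RH_pole f hs) (RH_pole g hs)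

lemma ev_apply (s : ℂ) (hs : 0 ≤ s.re) (f : RH) : ev s hs f = evalC f s := rfl

lemma atInf_eq (f : RatFunc ℝ) (hf : f.num.degree ≤ f.denom.degree) :
    atInfinity f = f.num.coeff f.denom.natDegree := by
  unfold atInfinity
  have hm : f.denom.leadingCoeff = 1 := f.monic_denom
  split_ifs with h
  · rw [hm, div_one, leadingCoeff, natDegree_eq_of_degree_eq h]
  · rw [coeff_eq_zero_of_degree_lt]
    rw [← degree_eq_natDegree f.denom_ne_zero]
    exact lt_of_le_of_ne hf h

lemma tendsto_poly (p : ℝ[X]) (N : ℕ) (hp : p.natDegree ≤ N) :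
    Tendsto (fun s : ℂ => p.eval₂ (algebraMap ℝ ℂ) s / s ^ N) (Bornology.cobounded ℂ)
      (𝓝 (p.coeff N : ℂ)) := by
  have h1 : ∀ s : ℂ, p.eval₂ (algebraMap ℝ ℂ) s / s ^ N
      = ∑ i ∈ Finset.range (N+1), (p.coeff i : ℂ) * (s ^ i / s ^ N) := by
    intro s
    rw [eval₂_eq_sum_range' _ (Nat.lt_succ_of_le hp), Finset.sum_div]
    refine Finset.sum_congr rfl fun i _ => ?_
    simp [mul_div_assoc]
  simp_rw [h1]
  have h2 : (p.coeff N : ℂ) = ∑ i ∈ Finset.range (N+1), (p.coeff i : ℂ) * (if i = N then 1 else 0) := by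
    simp
  rw [h2]
  refine tendsto_finsetSum _ fun i hi => Tendsto.const_mul _ ?_
  have hne : ∀ᶠ s : ℂ in Bornology.cobounded ℂ, s ≠ 0 := by
    have := (tendsto_norm_cobounded_atTop (E := ℂ)).eventually (eventually_gt_atTop 0)
    filter_upwards [this] with s hs
    exact norm_pos_iff.1 hs
  split_ifs with hiN
  · subst hiN
    refine tendsto_const_nhds.congr' ?_
    filter_upwards [hne] with s hs
    rw [div_self (pow_ne_zero _ hs)]
  · have hlt : i < N := lt_of_le_of_ne (Nat.lt_succ_iff.1 (Finset.mem_range.1 hi)) hiN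
    have h3 : Tendsto (fun s : ℂ => (s⁻¹) ^ (N - i)) (Bornology.cobounded ℂ) (𝓝 0) := by
      have := (tendsto_inv₀_cobounded (α := ℂ)).pow (N - i)
      rwa [zero_pow (by omega)] at this
    refine h3.congr' ?_
    filter_upwards [hne] with s hs
    rw [eq_div_iff (pow_ne_zero _ hs)]
    rw [inv_pow, inv_mul_eq_iff_eq_mul₀ (pow_ne_zero _ hs), ← pow_add]
    congr 1; omega

lemma tendsto_inf (f : RatFunc ℝ) (hf : f.num.degree ≤ f.denom.degree) :
    Tendsto (fun s : ℂ => evalC f s) (Bornology.cobounded ℂ) (𝓝 (atInfinity f : ℂ)) := by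
  have h1 := tendsto_poly f.num f.denom.natDegree (natDegree_le_natDegree hf)
  have h2 := tendsto_poly f.denom f.denom.natDegree le_rfl
  have hm : f.denom.coeff f.denom.natDegree = 1 := f.monic_denom
  rw [hm] at h2
  have h3 := h1.div h2 (by simp)
  rw [atInf_eq f hf]
  simp only [Complex.ofReal_one, div_one] at h3
  refine h3.congr' ?_
  have hne : ∀ᶠ s : ℂ in Bornology.cobounded ℂ, s ≠ 0 := by
    have := (tendsto_norm_cobounded_atTop (E := ℂ)).eventually (eventually_gt_atTop 0)
    filter_upwards [this] with s hs
    exact norm_pos_iff.1 hs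
  filter_upwards [hne] with s hs
  simp only [Pi.div_apply]
  rw [div_div_div_cancel_right₀ (pow_ne_zero _ hs)]
  rfl

lemma tendsto_real_cobounded : Tendsto (fun x : ℝ => (x : ℂ)) atTop (Bornology.cobounded ℂ) := by
  rw [← tendsto_norm_atTop_iff_cobounded]
  simp only [Complex.norm_real]
  exact tendsto_norm_atTop_atTop

lemma tendsto_inf_real (f : RH) :
    Tendsto (fun x : ℝ => evalC f (x : ℂ)) atTop (𝓝 (atInfinity f : ℂ)) :=
  (tendsto_inf f f.2.1).comp tendsto_real_cobounded

/-- Evaluation at infinity -/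
def evInf : RH →+* ℂ where
  toFun f := (atInfinity f : ℂ)
  map_one' := by simp [atInfinity]
  map_zero' := by simp [atInfinity]
  map_mul' f g := by
    refine tendsto_nhds_unique (tendsto_inf_real (f * g)) ?_
    refine ((tendsto_inf_real f).mul (tendsto_inf_real g)).congr' ?_
    filter_upwards [eventually_ge_atTop 0] with x hx
    exact ((ev (x : ℂ) (by simpa using hx)).map_mul f g).symm
  map_add' f g := by
    refine tendsto_nhds_unique (tendsto_inf_real (f + g)) ?_
    refine ((tendsto_inf_real f).add (tendsto_inf_real g)).congr' ?_
    filter_upwards [eventually_ge_atTop 0] with x hx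
    exact ((ev (x : ℂ) (by simpa using hx)).map_add f g).symm

lemma evInf_apply (f : RH) : evInf f = (atInfinity f : ℂ) := rfl

lemma RH_isUnit_iff (f : RH) :
    IsUnit f ↔ (∀ s (hs : 0 ≤ s.re), ev s hs f ≠ 0) ∧ evInf f ≠ 0 := by
  constructor
  · intro h
    exact ⟨fun s hs => (h.map (ev s hs)).ne_zero, (h.map evInf).ne_zero⟩
  · rintro ⟨h1, h2⟩
    have hnum : ∀ s : ℂ, 0 ≤ s.re → (f : RatFunc ℝ).num.eval₂ (algebraMap ℝ ℂ) s ≠ 0 := by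
      intro s hs h0
      apply h1 s hs
      rw [ev_apply]; unfold evalC RatFunc.eval; rw [h0, zero_div]
    have hn0 : (f : RatFunc ℝ).num ≠ 0 := by
      intro h0; apply hnum 0 (by simp); rw [h0]; simp
    have hf0 : (f : RatFunc ℝ) ≠ 0 := by
      intro h0; apply hn0; rw [h0]; simp
    have hdeg : (f : RatFunc ℝ).denom.degree ≤ (f : RatFunc ℝ).num.degree := by
      by_contra hc
      apply h2
      rw [evInf_apply]; unfold atInfinity
      rw [if_neg]; · simp
      intro h; exact hc h.ge
    have hinv : RHs (f : RatFunc ℝ)⁻¹ := by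
      refine RHs_mk _ _ _ hn0 hdeg hnum ?_
      conv_lhs => rw [rep (f : RatFunc ℝ)]
      rw [inv_div]
    refine IsUnit.of_mul_eq_one ⟨_, hinv⟩ ?_
    ext
    simp [hf0]

lemma exists_mul_X (f : RH) : ∃ g : RH, ∀ s (hs : 0 ≤ s.re), ev s hs g = s * (ev s hs f - evInf f) := by
  set p := (f : RatFunc ℝ).num
  set q := (f : RatFunc ℝ).denom with hqd
  have hq : q ≠ 0 := RatFunc.denom_ne_zero _
  set c := atInfinity (f : RatFunc ℝ) with hc
  have hcc : c = p.coeff q.natDegree := atInf_eq _ f.2.1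
  have hqm : q.coeff q.natDegree = 1 := RatFunc.monic_denom _
  have hdeg : (p - Polynomial.C c * q).degree < q.degree := by
    rw [degree_eq_natDegree hq]
    rw [degree_lt_iff_coeff_zero]
    intro m hm
    rcases hm.eq_or_lt with rfl | hm
    · simp [hcc, hqm]
    · rw [coeff_sub, coeff_C_mul, coeff_eq_zero_of_natDegree_lt hm, coeff_eq_zero_of_natDegree_lt]
      · simp
      · exact lt_of_le_of_lt (natDegree_le_natDegree f.2.1) hm
  have hdeg2 : (Polynomial.X * (p - Polynomial.C c * q)).degree ≤ q.degree := by
    rw [degree_mul, degree_X]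
    by_cases h0 : p - Polynomial.C c * q = 0
    · rw [h0]; simp
    · rw [degree_eq_natDegree h0, degree_eq_natDegree hq] at *
      have : (p - Polynomial.C c * q).natDegree < q.natDegree := by exact_mod_cast hdeg
      have : 1 + (p - Polynomial.C c * q).natDegree ≤ q.natDegree := by omega
      exact_mod_cast this
  refine ⟨⟨_, RHs_mk _ _ q hq hdeg2 f.2.2 rfl⟩, fun s hs => ?_⟩
  have hp := RH_pole f hs
  rw [ev_apply, ev_apply, evInf_apply]
  rw [evalC_mk _ _ q hq s hp rfl, rep (f : RatFunc ℝ), evalC_mk _ _ _ hq s hp rfl, ← rep]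
  rw [eval₂_mul, eval₂_sub, eval₂_mul, eval₂_X, eval₂_C]
  rw [← hqd] at *
  have hp' : q.eval₂ (algebraMap ℝ ℂ) s ≠ 0 := hp
  have e1 : (f : RatFunc ℝ).num = p := rfl
  have e2 : (f : RatFunc ℝ).denom = q := rfl
  rw [e1, ← hc]
  simp only [Complex.coe_algebraMap]
  have hp'' : q.eval₂ Complex.ofRealHom s ≠ 0 := hp
  field_simp

lemma exists_div_X (f : RH) : ∃ g : RH, ∀ s (hs : 0 ≤ s.re),
    s * ev s hs g = ev s hs f - ev 0 (by simp) f := by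
  set p := (f : RatFunc ℝ).num with hpd
  set q := (f : RatFunc ℝ).denom with hqd
  have hq : q ≠ 0 := RatFunc.denom_ne_zero _
  have hq0 : q.eval 0 ≠ 0 := by
    have := RH_pole f (s := 0) (by simp)
    intro h; apply this
    rw [← hqd, eval₂_at_zero, coeff_zero_eq_eval_zero, h]; simp
  set c := p.eval 0 / q.eval 0 with hc
  have hev : ev 0 (by simp) f = (c : ℂ) := by
    rw [ev_apply]; unfold evalC RatFunc.eval
    rw [← hpd, ← hqd, eval₂_at_zero, eval₂_at_zero, coeff_zero_eq_eval_zero, coeff_zero_eq_eval_zero]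
    simp [hc]
  set r := p - Polynomial.C c * q with hr
  have hr0 : r.coeff 0 = 0 := by
    rw [coeff_zero_eq_eval_zero, hr]
    simp [hc]
    field_simp
    simp
  have hrX : r.divX * Polynomial.X = r := by
    have := r.divX_mul_X_add
    rwa [hr0, map_zero, add_zero] at this
  have hrdeg : r.degree ≤ q.degree := by
    refine (degree_sub_le _ _).trans (max_le f.2.1 ?_)
    rw [degree_mul]
    calc _ ≤ 0 + q.degree := by gcongr; exact degree_C_le
      _ = _ := zero_add _
  have hdeg : r.divX.degree ≤ q.degree := by
    refine le_trans ?_ hrdeg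
    conv_rhs => rw [← hrX]
    rw [degree_mul, degree_X]
    exact le_add_of_nonneg_right (by norm_num)
  refine ⟨⟨_, RHs_mk _ _ q hq hdeg f.2.2 rfl⟩, fun s hs => ?_⟩
  have hp := RH_pole f hs
  rw [hev, ev_apply, ev_apply]
  rw [evalC_mk _ _ q hq s hp rfl, rep (f : RatFunc ℝ), evalC_mk _ _ _ hq s hp rfl]
  have h2 := congrArg (fun r => Polynomial.eval₂ (algebraMap ℝ ℂ) s r) hrX
  simp only [eval₂_mul, eval₂_X, hr, eval₂_sub, eval₂_C] at h2
  have hp' : q.eval₂ (algebraMap ℝ ℂ) s ≠ 0 := hp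
  rw [← mul_div_assoc, mul_comm s, ← hr] at *
  rw [h2]
  rw [sub_div]
  simp
  rw [mul_div_assoc, div_self hp', mul_one]

/-! ### Maximum principle -/

/-- bounded analytic on the closed right half plane -/
def BA (φ : ℂ → ℂ) : Prop :=
  (∀ s : ℂ, 0 ≤ s.re → DifferentiableAt ℂ φ s) ∧ ∃ B : ℝ, ∀ s : ℂ, 0 ≤ s.re → ‖φ s‖ ≤ B

lemma BA.add {φ ψ : ℂ → ℂ} (h1 : BA φ) (h2 : BA ψ) : BA (fun s => φ s + ψ s) := by
  obtain ⟨a, B, hB⟩ := h1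
  obtain ⟨b, D, hD⟩ := h2
  exact ⟨fun s hs => (a s hs).add (b s hs), B + D, fun s hs =>
    (norm_add_le _ _).trans (add_le_add (hB s hs) (hD s hs))⟩

lemma BA.const_mul {φ : ℂ → ℂ} (c : ℂ) (h1 : BA φ) : BA (fun s => c * φ s) := by
  obtain ⟨a, B, hB⟩ := h1
  exact ⟨fun s hs => (a s hs).const_mul c, ‖c‖ * B, fun s hs => by
    rw [norm_mul]; gcongr; exact hB s hs⟩

lemma BA.zero : BA (fun _ => 0) := ⟨fun s _ => differentiableAt_const 0, 0, fun s _ => by simp⟩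

lemma BA.sum {ι : Type*} (t : Finset ι) (φ : ι → ℂ → ℂ) (h : ∀ i, BA (φ i)) :
    BA (fun s => ∑ i ∈ t, φ i s) := by
  classical
  induction t using Finset.induction_on with
  | empty => simpa using BA.zero
  | insert a t ha ih =>
    simp only [Finset.sum_insert ha]
    exact (h a).add ih

lemma BA_of_RH (f : RH) : BA (fun s => evalC f s) := by
  have hd : ∀ s : ℂ, 0 ≤ s.re → DifferentiableAt ℂ (fun s => evalC f s) s := by
    intro s hs
    unfold evalC RatFunc.eval
    simp only [Polynomial.eval₂_eq_eval_map]
    refine DifferentiableAt.div ?_ ?_ ?_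
    · exact Polynomial.differentiableAt _
    · exact Polynomial.differentiableAt _
    · rw [← Polynomial.eval₂_eq_eval_map]; exact RH_pole f hs
  refine ⟨hd, ?_⟩
  have ht := (tendsto_inf f f.2.1).norm
  have hev : ∀ᶠ s : ℂ in Bornology.cobounded ℂ,
      ‖evalC f s‖ ≤ ‖(atInfinity f : ℂ)‖ + 1 :=
    (ht.eventually (gt_mem_nhds (lt_add_one _))).mono fun s hs => hs.le
  rw [(Filter.hasBasis_cobounded_norm (E := ℂ)).eventually_iff] at hev
  obtain ⟨R, -, hR⟩ := hev
  have hK : IsCompact ({s : ℂ | 0 ≤ s.re} ∩ Metric.closedBall 0 R) := by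
    refine (isCompact_closedBall (0 : ℂ) R).inter_left ?_
    exact isClosed_le continuous_const Complex.continuous_re
  have hc : ContinuousOn (fun s => evalC f s) ({s : ℂ | 0 ≤ s.re} ∩ Metric.closedBall 0 R) :=
    fun s hs => (hd s hs.1).continuousAt.continuousWithinAt
  obtain ⟨B, hB⟩ := hK.exists_bound_of_continuousOn hc
  refine ⟨max B (‖(atInfinity f : ℂ)‖ + 1), fun s hs => ?_⟩
  rcases le_total R ‖s‖ with h | h
  · exact (hR h).trans (le_max_right _ _)
  · exact (hB s ⟨hs, by simpa using h⟩).trans (le_max_left _ _)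

lemma max_principle (h : ℂ → ℂ) (hh : BA h) (hb : ∀ ω : ℝ, ω ≠ 0 → 0 ≤ (h (jw ω)).re)
    (s : ℂ) (hs : 0 < s.re) : 0 ≤ (h s).re := by
  obtain ⟨hd, B, hB⟩ := hh
  have hb' : ∀ ω : ℝ, 0 ≤ (h (jw ω)).re := by
    intro ω
    by_cases hω : ω = 0
    · subst hω
      have hc : ContinuousAt (fun ω : ℝ => (h (jw ω)).re) 0 := by
        have h1 : ContinuousAt h (jw 0) := (hd _ (by simp [jw])).continuousAt
        have h2 : Continuous (fun ω : ℝ => jw ω) := by unfold jw; fun_prop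
        exact Complex.continuous_re.continuousAt.comp (ContinuousAt.comp (f := fun ω : ℝ => jw ω) h1 h2.continuousAt)
      have ht : Tendsto (fun ω : ℝ => (h (jw ω)).re) (𝓝[≠] 0) (𝓝 ((h (jw 0)).re)) :=
        hc.tendsto.mono_left nhdsWithin_le_nhds
      refine ge_of_tendsto ht ?_
      filter_upwards [self_mem_nhdsWithin] with ω hω
      exact hb ω hω
    · exact hb ω hω
  have hbound : ∀ s : ℂ, 0 ≤ s.re → ‖Complex.exp (-h s)‖ ≤ Real.exp B := by
    intro s hs
    rw [Complex.norm_exp]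
    gcongr
    have := (Complex.abs_re_le_norm (h s)).trans (hB s hs)
    simp only [Complex.neg_re]
    exact (neg_le_abs _).trans this
  have key : ‖Complex.exp (-h s)‖ ≤ 1 := by
    refine PhragmenLindelof.right_half_plane_of_bounded_on_real (f := fun s => Complex.exp (-h s))
      ?_ ?_ ?_ ?_ hs.le
    · refine DifferentiableOn.diffContOnCl ?_
      intro z hz
      rw [Complex.closure_setOfPred_lt_re] at hz
      exact ((hd z hz).neg.cexp).differentiableWithinAt
    · refine ⟨1, by norm_num, 0, ?_⟩
      refine Asymptotics.IsBigO.of_bound (Real.exp B) ?_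
      rw [eventually_inf_principal]
      refine Eventually.of_forall fun z hz => ?_
      simpa using hbound z (le_of_lt hz)
    · refine ⟨Real.exp B, ?_⟩
      rw [eventually_map]
      filter_upwards [eventually_ge_atTop 0] with x hx
      exact hbound _ (by simpa using hx)
    · intro x
      have := hb' x
      rw [Complex.norm_exp]
      rw [Real.exp_le_one_iff]
      rw [jw, mul_comm] at this
      simpa using this
  rw [Complex.norm_exp, Real.exp_le_one_iff] at key
  simpa using key

/-! ### Sesquilinear forms -/

/-- `x^* M y` -/
def sq (M : Matrix (Fin n) (Fin n) ℂ) (x y : Fin n → ℂ) : ℂ := star x ⬝ᵥ (M *ᵥ y)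

lemma sq_sum (M : Matrix (Fin n) (Fin n) ℂ) (x y : Fin n → ℂ) :
    sq M x y = ∑ i, ∑ j, (star (x i) * y j) * M i j := by
  unfold sq
  simp only [dotProduct, mulVec, Finset.mul_sum, Pi.star_apply]
  refine Finset.sum_congr rfl fun i _ => Finset.sum_congr rfl fun j _ => by ring

lemma sq_sub (M N : Matrix (Fin n) (Fin n) ℂ) (x y : Fin n → ℂ) :
    sq (M - N) x y = sq M x y - sq N x y := by
  simp [sq, sub_mulVec, dotProduct_sub]

lemma sq_smul (c : ℂ) (M : Matrix (Fin n) (Fin n) ℂ) (x y : Fin n → ℂ) :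
    sq (c • M) x y = c * sq M x y := by
  simp [sq, smul_mulVec, dotProduct_smul]

lemma sq_conjTranspose (M : Matrix (Fin n) (Fin n) ℂ) (x y : Fin n → ℂ) :
    sq Mᴴ x y = star (sq M y x) := by
  rw [sq_sum, sq_sum, star_sum, Finset.sum_comm]
  refine Finset.sum_congr rfl fun i _ => ?_
  rw [star_sum]
  refine Finset.sum_congr rfl fun j _ => ?_
  simp [conjTranspose_apply, mul_comm]

lemma sq_add_left (M : Matrix (Fin n) (Fin n) ℂ) (x x' y : Fin n → ℂ) :
    sq M (x + x') y = sq M x y + sq M x' y := by simp [sq, add_dotProduct]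
lemma sq_add_right (M : Matrix (Fin n) (Fin n) ℂ) (x y y' : Fin n → ℂ) :
    sq M x (y + y') = sq M x y + sq M x y' := by simp [sq, mulVec_add, dotProduct_add]
lemma sq_smul_left (c : ℂ) (M : Matrix (Fin n) (Fin n) ℂ) (x y : Fin n → ℂ) :
    sq M (c • x) y = star c * sq M x y := by simp [sq, smul_dotProduct]
lemma sq_smul_right (c : ℂ) (M : Matrix (Fin n) (Fin n) ℂ) (x y : Fin n → ℂ) :
    sq M x (c • y) = c * sq M x y := by simp [sq, mulVec_smul, dotProduct_smul]

lemma sq_conj (M : Matrix (Fin n) (Fin n) ℂ) (x y : Fin n → ℂ) :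
    sq (M.map star) x y = star (sq M (star x) (star y)) := by
  rw [sq_sum, sq_sum, star_sum]
  refine Finset.sum_congr rfl fun i _ => ?_
  rw [star_sum]
  refine Finset.sum_congr rfl fun j _ => ?_
  simp

lemma niKer_herm (M : Matrix (Fin n) (Fin n) ℂ) : (niKer M).IsHermitian := by
  unfold niKer Matrix.IsHermitian
  rw [conjTranspose_smul, conjTranspose_sub, conjTranspose_conjTranspose]
  simp only [RCLike.star_def, Complex.conj_I, neg_smul]
  rw [← smul_neg, neg_sub]

lemma niKer_sq (M : Matrix (Fin n) (Fin n) ℂ) (x : Fin n → ℂ) :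
    sq (niKer M) x x = ((-2 * (sq M x x).im : ℝ) : ℂ) := by
  unfold niKer
  rw [sq_smul, sq_sub, sq_conjTranspose]
  apply Complex.ext <;> simp
  ring

lemma niKer_psd (M : Matrix (Fin n) (Fin n) ℂ) :
    (niKer M).PosSemidef ↔ ∀ x, (sq M x x).im ≤ 0 := by
  rw [posSemidef_iff_dotProduct_mulVec]
  constructor
  · rintro ⟨-, h⟩ x
    have := h x
    change 0 ≤ sq (niKer M) x x at this
    rw [niKer_sq, Complex.zero_le_real] at this
    linarith
  · intro h
    refine ⟨niKer_herm M, fun x => ?_⟩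
    change 0 ≤ sq (niKer M) x x
    rw [niKer_sq, Complex.zero_le_real]
    linarith [h x]

lemma niKer_pd (M : Matrix (Fin n) (Fin n) ℂ) :
    (niKer M).PosDef ↔ ∀ x, x ≠ 0 → (sq M x x).im < 0 := by
  rw [posDef_iff_dotProduct_mulVec]
  constructor
  · rintro ⟨-, h⟩ x hx
    have := h hx
    change 0 < sq (niKer M) x x at this
    rw [niKer_sq, Complex.zero_lt_real] at this
    linarith
  · intro h
    refine ⟨niKer_herm M, fun x hx => ?_⟩
    change 0 < sq (niKer M) x x
    rw [niKer_sq, Complex.zero_lt_real]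
    linarith [h x hx]

/-! ### The key inequality -/

lemma BA.const (c : ℂ) : BA (fun _ => c) :=
  ⟨fun s _ => differentiableAt_const c, ‖c‖, fun s _ => le_rfl⟩

/-- pointwise evaluation -/
def mv (G : Matrix (Fin n) (Fin n) RH) (s : ℂ) : Matrix (Fin n) (Fin n) ℂ :=
  Matrix.of fun i j => evalC (G i j) s

/-- value at infinity -/
def mI (G : Matrix (Fin n) (Fin n) RH) : Matrix (Fin n) (Fin n) ℂ :=
  Matrix.of fun i j => evInf (G i j)

lemma mv_eq (G : Matrix (Fin n) (Fin n) RH) (s : ℂ) (hs : 0 ≤ s.re) : mv G s = G.map (ev s hs) := rfl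

lemma mI_eq (G : Matrix (Fin n) (Fin n) RH) : mI G = G.map evInf := rfl

lemma BA_sq (G : Matrix (Fin n) (Fin n) RH) (x y : Fin n → ℂ) : BA (fun s => sq (mv G s) x y) := by
  simp only [sq_sum]
  exact BA.sum _ _ fun i => BA.sum _ _ fun j => (BA_of_RH (G i j)).const_mul _

lemma evalC_conj (f : RatFunc ℝ) (s : ℂ) : evalC f (star s) = star (evalC f s) := by
  have h : ∀ p : ℝ[X], p.eval₂ (algebraMap ℝ ℂ) (star s) = star (p.eval₂ (algebraMap ℝ ℂ) s) := by
    intro p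
    have := Polynomial.hom_eval₂ p (algebraMap ℝ ℂ) (starRingEnd ℂ) s
    have h2 : (starRingEnd ℂ).comp (algebraMap ℝ ℂ) = algebraMap ℝ ℂ := by
      ext x; simp
    rw [h2] at this
    exact this.symm
  unfold evalC RatFunc.eval
  rw [h, h, star_div₀]

lemma mv_conj (G : Matrix (Fin n) (Fin n) RH) (s : ℂ) : mv G (star s) = (mv G s).map star := by
  ext i j
  exact evalC_conj _ _

lemma mI_conj (G : Matrix (Fin n) (Fin n) RH) : mI G = (mI G).map star := by
  ext i j
  simp [mI, evInf_apply]

lemma sq_mv_neg (G : Matrix (Fin n) (Fin n) RH) (ω : ℝ) (u : Fin n → ℂ) :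
    sq (mv G (jw (-ω))) u u = star (sq (mv G (jw ω)) (star u) (star u)) := by
  have : jw (-ω) = star (jw ω) := by simp [jw]
  rw [this, mv_conj, sq_conj]

lemma im_zero_of_real (M : Matrix (Fin n) (Fin n) ℂ) (hM : M = M.map star)
    (h : ∀ u, (sq M u u).im ≤ 0) (u : Fin n → ℂ) : (sq M u u).im = 0 := by
  refine le_antisymm (h u) ?_
  rw [hM, sq_conj]
  have := h (star u)
  simpa using this

lemma jw_re (ω : ℝ) : (jw ω).re = 0 := by simp [jw]

/-- NI on positive frequencies as a quadratic form condition -/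
def NIq (G : Matrix (Fin n) (Fin n) RH) : Prop :=
  ∀ ω : ℝ, 0 < ω → ∀ u, (sq (mv G (jw ω)) u u).im ≤ 0

lemma jw_tendsto : Tendsto (fun ω : ℝ => jw ω) atTop (Bornology.cobounded ℂ) := by
  rw [← tendsto_norm_atTop_iff_cobounded]
  simp only [jw, norm_mul, Complex.norm_I, one_mul, Complex.norm_real]
  exact tendsto_norm_atTop_atTop

lemma NIq.zero {G : Matrix (Fin n) (Fin n) RH} (h : NIq G) (u : Fin n → ℂ) :
    (sq (mv G 0) u u).im = 0 := by
  refine im_zero_of_real _ ?_ ?_ u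
  · conv_lhs => rw [← star_zero ℂ]
    exact mv_conj G 0
  · intro u
    have hc : ContinuousAt (fun ω : ℝ => (sq (mv G (jw ω)) u u).im) 0 := by
      have h1 : ContinuousAt (fun s => sq (mv G s) u u) (jw 0) :=
        ((BA_sq G u u).1 _ (by simp [jw])).continuousAt
      have h2 : Continuous (fun ω : ℝ => jw ω) := by unfold jw; fun_prop
      exact Complex.continuous_im.continuousAt.comp
        (ContinuousAt.comp (f := fun ω : ℝ => jw ω) h1 h2.continuousAt)
    have ht := hc.tendsto.mono_left (nhdsWithin_le_nhds (s := Set.Ioi 0))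
    have := le_of_tendsto ht (b := 0) (by
      filter_upwards [self_mem_nhdsWithin] with ω hω
      exact h ω hω u)
    simpa [jw] using this

lemma tendsto_sq_inf (G : Matrix (Fin n) (Fin n) RH) (x y : Fin n → ℂ) :
    Tendsto (fun s => sq (mv G s) x y) (Bornology.cobounded ℂ) (𝓝 (sq (mI G) x y)) := by
  simp only [sq_sum]
  refine tendsto_finsetSum _ fun i _ => tendsto_finsetSum _ fun j _ => Tendsto.const_mul _ ?_
  exact tendsto_inf (G i j) (G i j).2.1

lemma NIq.inf {G : Matrix (Fin n) (Fin n) RH} (h : NIq G) (u : Fin n → ℂ) :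
    (sq (mI G) u u).im = 0 := by
  refine im_zero_of_real _ (mI_conj G) ?_ u
  intro u
  have ht := (Complex.continuous_im.tendsto _).comp ((tendsto_sq_inf G u u).comp jw_tendsto)
  refine le_of_tendsto ht ?_
  filter_upwards [eventually_gt_atTop 0] with ω hω
  exact h ω hω u

lemma pick {G : Matrix (Fin n) (Fin n) RH} (h : NIq G) (s : ℂ) (hs : 0 < s.re)
    (x w : Fin n → ℂ) :
    0 ≤ (s * (sq (mv G s) x x - sq (mI G) x x)
      + 2 * s.re * (sq (mv G s) w x - sq (mI G) w x)
      + s.re * (sq (mv G 0) w w - sq (mI G) w w)).re := by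
  choose k1 hk1 using exists_mul_X
  choose k2 hk2 using exists_div_X
  set K1 : Matrix (Fin n) (Fin n) RH := Matrix.of fun i j => k1 (G i j) with hK1
  set K2 : Matrix (Fin n) (Fin n) RH := Matrix.of fun i j => k2 (G i j) with hK2
  have e1 : ∀ z : ℂ, 0 ≤ z.re → ∀ a b, sq (mv K1 z) a b = z * (sq (mv G z) a b - sq (mI G) a b) := by
    intro z hz a b
    rw [← sq_sub, ← sq_smul]
    congr 1
    ext i j
    exact hk1 (G i j) z hz
  have e2 : ∀ z : ℂ, 0 ≤ z.re → ∀ a b, z * sq (mv K2 z) a b = sq (mv G z) a b - sq (mv G 0) a b := by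
    intro z hz a b
    rw [← sq_sub, ← sq_smul]
    congr 1
    ext i j
    exact hk2 (G i j) z hz
  have hKB : ∀ a b, BA (fun z => sq (mv G z) a b + (- sq (mI G) a b)) := fun a b =>
    (BA_sq G a b).add (BA.const _)
  set H : ℂ → ℂ := fun z => sq (mv K1 z) x x + (-s) * (sq (mv G z) x w + (- sq (mI G) x w))
      + sq (mv K1 z) x w + sq (mv K1 z) w x + (star s) * (sq (mv G z) w x + (- sq (mI G) w x))
      + (-(s * star s)) * sq (mv K2 z) w w
      + (-(s - star s)) * (sq (mv G z) w w + (- sq (mI G) w w)) + sq (mv K1 z) w w with hH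
  have hBA : BA H := by
    refine BA.add (BA.add (BA.add (BA.add (BA.add (BA.add (BA.add ?_ ?_) ?_) ?_) ?_) ?_) ?_) ?_
    · exact BA_sq _ _ _
    · exact (hKB _ _).const_mul _
    · exact BA_sq _ _ _
    · exact BA_sq _ _ _
    · exact (hKB _ _).const_mul _
    · exact (BA_sq _ _ _).const_mul _
    · exact (hKB _ _).const_mul _
    · exact BA_sq _ _ _
  have hre := max_principle H hBA ?_ s hs
  · have hss : (2 * s.re : ℂ) = s + star s := by
      simpa using (Complex.add_conj s).symm
    have hs0 : s ≠ 0 := by rintro rfl; simp at hs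
    have e3 := e2 s hs.le w w
    have hval : H s = s * (sq (mv G s) x x - sq (mI G) x x)
      + 2 * s.re * (sq (mv G s) w x - sq (mI G) w x)
      + star s * (sq (mv G 0) w w - sq (mI G) w w) := by
      simp only [hH]
      rw [e1 s hs.le, e1 s hs.le, e1 s hs.le, e1 s hs.le, hss]
      linear_combination (-star s) * e3
    rw [hval] at hre
    have h0 := h.zero w
    have hi := h.inf w
    simp only [Complex.add_re] at hre ⊢
    have e4 : (star s * (sq (mv G 0) w w - sq (mI G) w w)).re
        = (s.re * (sq (mv G 0) w w - sq (mI G) w w)).re := by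
      simp [Complex.mul_re, h0, hi]
    rwa [e4] at hre
  · intro ω hω
    have hz : 0 ≤ (jw ω).re := (jw_re ω).ge
    have hz0 : jw ω ≠ 0 := by simp [jw, hω]
    set c : ℂ := -(s - jw ω) / jw ω with hc
    have hsc : star c = (star s + jw ω) / jw ω := by
      have : star (jw ω) = - jw ω := by simp [jw]
      rw [hc, star_div₀, star_neg, star_sub, this]
      field_simp
      ring
    have hexp : ∀ M : Matrix (Fin n) (Fin n) ℂ, sq M (x + c • w) (x + c • w)
        = sq M x x + c * sq M x w + star c * sq M w x + star c * c * sq M w w := by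
      intro M
      simp only [sq_add_left, sq_add_right, sq_smul_left, sq_smul_right]
      ring
    have e3 := e2 (jw ω) hz w w
    have e3' : sq (mv K2 (jw ω)) w w = (sq (mv G (jw ω)) w w - sq (mv G 0) w w) / jw ω := by
      rw [← e3]; field_simp
    have hval : H (jw ω) = jw ω * (sq (mv G (jw ω)) (x + c • w) (x + c • w)
          - sq (mI G) (x + c • w) (x + c • w))
        + (s * star s) * ((sq (mv G 0) w w - sq (mI G) w w) / jw ω) := by
      rw [hexp, hexp, hsc, hc]
      simp only [hH]
      rw [e1 _ hz, e1 _ hz, e1 _ hz, e1 _ hz, e3']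
      field_simp
      ring
    rw [hval]
    have hI := h.inf (x + c • w)
    have h0 := h.zero w
    have hi := h.inf w
    have hmain : ω * (sq (mv G (jw ω)) (x + c • w) (x + c • w)).im ≤ 0 := by
      rcases lt_or_gt_of_ne hω with hneg | hpos
      · have h1 := h (-ω) (by linarith) (star (x + c • w))
        have h2 := sq_mv_neg G (-ω) (x + c • w)
        rw [neg_neg] at h2
        rw [h2]
        simp only [RCLike.star_def, Complex.conj_im]
        nlinarith
      · have := h ω hpos (x + c • w)
        nlinarith
    have hr2 : ((s * star s) * ((sq (mv G 0) w w - sq (mI G) w w) / jw ω)).re = 0 := by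
      have h1 : s * star s = ((Complex.normSq s : ℝ) : ℂ) := Complex.mul_conj s
      have h2 : sq (mv G 0) w w - sq (mI G) w w = (((sq (mv G 0) w w - sq (mI G) w w).re : ℝ) : ℂ) := by
        apply Complex.ext <;> simp [h0, hi]
      rw [h1, h2, jw]
      simp [Complex.div_re, Complex.mul_re]
    rw [Complex.add_re, hr2, add_zero]
    simp only [jw] at *
    simp only [Complex.mul_re, Complex.mul_im, Complex.I_re, Complex.I_im, Complex.ofReal_re,
      Complex.ofReal_im, Complex.sub_re, Complex.sub_im]
    rw [hI]
    linarith

/-! ### Stability -/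

/-- underlying rational matrix -/
def un (G : Matrix (Fin n) (Fin n) RH) : Matrix (Fin n) (Fin n) (RatFunc ℝ) := G.map RH.subtype

lemma exists_lift {G : Matrix (Fin n) (Fin n) (RatFunc ℝ)} (h : MemRHinf G) :
    ∃ G' : Matrix (Fin n) (Fin n) RH, un G' = G :=
  ⟨Matrix.of fun i j => ⟨G i j, h.1 i j, fun s hs => h.2 s hs i j⟩, by ext i j; rfl⟩

lemma memRHinf_un (G : Matrix (Fin n) (Fin n) RH) : MemRHinf (un G) :=
  ⟨fun i j => (G i j).2.1, fun s hs i j => (G i j).2.2 s hs⟩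

lemma evalM_un (G : Matrix (Fin n) (Fin n) RH) (s : ℂ) : evalM (un G) s = mv G s := rfl

lemma un_mul (G H : Matrix (Fin n) (Fin n) RH) : un (G * H) = un G * un H := by
  unfold un; exact Matrix.map_mul

lemma un_inj {G H : Matrix (Fin n) (Fin n) RH} (h : un G = un H) : G = H := by
  ext i j
  have := congrFun (congrFun h i) j
  exact this

lemma un_one : un (1 : Matrix (Fin n) (Fin n) RH) = 1 := by
  unfold un; exact Matrix.map_one _ (map_zero _) (map_one _)

lemma un_sub (G H : Matrix (Fin n) (Fin n) RH) : un (G - H) = un G - un H := by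
  ext i j; rfl

lemma un_det (G : Matrix (Fin n) (Fin n) RH) : (un G).det = RH.subtype G.det := by
  rw [RingHom.map_det]; rfl

lemma fb_iff (P C : Matrix (Fin n) (Fin n) RH) :
    FeedbackStable (un P) (un C) ↔ IsUnit (1 - P * C).det := by
  have hN : (1 - un P * un C) = un (1 - P * C) := by rw [un_sub, un_one, un_mul]
  unfold FeedbackStable
  rw [hN]
  constructor
  · rintro ⟨hdet, hmem⟩
    have hb : MemRHinf (un (1 - P * C))⁻¹ := by
      refine ⟨fun i j => hmem.1 (Sum.inl i) (Sum.inl j), fun s hs i j => hmem.2 s hs (Sum.inl i) (Sum.inl j)⟩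
    obtain ⟨N, hNN⟩ := exists_lift hb
    have : (1 - P * C) * N = 1 := by
      apply un_inj
      rw [un_mul, hNN, un_one]
      exact Matrix.mul_nonsing_inv _ (isUnit_iff_ne_zero.2 hdet)
    have h2 := congrArg Matrix.det this
    rw [det_mul, det_one] at h2
    exact IsUnit.of_mul_eq_one _ h2
  · intro hu
    have hinv : (un (1 - P * C))⁻¹ = un ((1 - P * C)⁻¹) := by
      refine Matrix.inv_eq_right_inv ?_
      rw [← un_mul, Matrix.mul_nonsing_inv _ hu, un_one]
    refine ⟨?_, ?_⟩
    · rw [un_det]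
      exact (hu.map RH.subtype).ne_zero
    · rw [hinv, ← un_mul, ← un_mul, ← un_mul]
      constructor
      · rintro (i | i) (j | j)
        · exact (memRHinf_un ((1 - P * C)⁻¹)).1 i j
        · exact (memRHinf_un ((1 - P * C)⁻¹ * P)).1 i j
        · exact (memRHinf_un (C * (1 - P * C)⁻¹)).1 i j
        · exact (memRHinf_un (C * (1 - P * C)⁻¹ * P)).1 i j
      · rintro s hs (i | i) (j | j)
        · exact (memRHinf_un ((1 - P * C)⁻¹)).2 s hs i j
        · exact (memRHinf_un ((1 - P * C)⁻¹ * P)).2 s hs i j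
        · exact (memRHinf_un (C * (1 - P * C)⁻¹)).2 s hs i j
        · exact (memRHinf_un (C * (1 - P * C)⁻¹ * P)).2 s hs i j

lemma ev_det (P C : Matrix (Fin n) (Fin n) RH) (s : ℂ) (hs : 0 ≤ s.re) :
    ev s hs (1 - P * C).det = (1 - mv P s * mv C s).det := by
  rw [RingHom.map_det]
  congr 1
  rw [mv_eq P s hs, mv_eq C s hs, map_sub, map_mul, map_one]
  rfl

lemma evInf_det (P C : Matrix (Fin n) (Fin n) RH) :
    evInf (1 - P * C).det = (1 - mI P * mI C).det := by
  rw [RingHom.map_det]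
  congr 1
  rw [mI_eq, mI_eq, map_sub, map_mul, map_one]
  rfl

lemma fb_iff' (P C : Matrix (Fin n) (Fin n) RH) :
    FeedbackStable (un P) (un C) ↔
      (∀ s : ℂ, 0 ≤ s.re → (1 - mv P s * mv C s).det ≠ 0) ∧ (1 - mI P * mI C).det ≠ 0 := by
  rw [fb_iff, RH_isUnit_iff, evInf_det]
  simp only [ev_det]

/-! ### Sufficiency -/

lemma det_ne (A B : Matrix (Fin n) (Fin n) ℂ)
    (h : ∀ x y : Fin n → ℂ, y ≠ 0 → B *ᵥ x = y → A *ᵥ y = x → False) : (1 - A * B).det ≠ 0 := by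
  intro h0
  obtain ⟨x, hx, hx2⟩ := Matrix.exists_mulVec_eq_zero_iff.2 h0
  rw [sub_mulVec, one_mulVec, sub_eq_zero, ← mulVec_mulVec] at hx2
  refine h x (B *ᵥ x) ?_ rfl hx2.symm
  intro hy
  rw [hy, mulVec_zero] at hx2
  exact hx hx2

lemma re_symm (M : Matrix (Fin n) (Fin n) ℂ) (h : ∀ u, (sq M u u).im = 0) (x y : Fin n → ℂ) :
    (sq M x y).re = (sq M y x).re := by
  have h1 := h (x + Complex.I • y)
  simp only [sq_add_left, sq_add_right, sq_smul_left, sq_smul_right] at h1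
  have hx := h x
  have hy := h y
  simp [hx, hy] at h1
  linarith

/-- squared norm -/
def nrm (y : Fin n → ℂ) : ℝ := (star y ⬝ᵥ y).re

lemma sq_eq_dot {M : Matrix (Fin n) (Fin n) ℂ} {x y : Fin n → ℂ} (h : M *ᵥ x = y) (w : Fin n → ℂ) :
    sq M w x = star w ⬝ᵥ y := by rw [sq, h]

lemma re_quad (M : Matrix (Fin n) (Fin n) ℂ) (h : ∀ u, (sq M u u).im = 0) (x y : Fin n → ℂ) (g : ℝ) :
    (sq M (x + (-g : ℂ) • y) (x + (-g : ℂ) • y)).re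
      = (sq M x x).re - 2 * g * (sq M y x).re + g ^ 2 * (sq M y y).re := by
  simp only [sq_add_left, sq_add_right, sq_smul_left, sq_smul_right]
  have h2 := re_symm M h x y
  simp [Complex.mul_re]
  rw [h2]
  ring

lemma dot_conj_re (x y : Fin n → ℂ) : (star y ⬝ᵥ x).re = (star x ⬝ᵥ y).re := by
  have : star y ⬝ᵥ x = star (star x ⬝ᵥ y) := by
    rw [star_dotProduct]
  rw [this]; simp

lemma static_det (A B : Matrix (Fin n) (Fin n) ℂ) (γ : ℝ) (hγ : 0 < γ)
    (hA : ∀ y, (sq A y y).re ≤ γ * nrm y)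
    (hB : ∀ y, y ≠ 0 → (sq B y y).re < γ⁻¹ * nrm y)
    (hBs : ∀ u, (sq B u u).im = 0) (hB0 : ∀ u, 0 ≤ (sq B u u).re) : (1 - A * B).det ≠ 0 := by
  apply det_ne
  intro x y hy h1 h2
  have e1 := hB0 (x + (-γ : ℂ) • y)
  rw [re_quad B hBs, sq_eq_dot h1, sq_eq_dot h1] at e1
  have e2 := hA y
  rw [sq_eq_dot h2, dot_conj_re] at e2
  have e3 := hB y hy
  have e4 : γ ^ 2 * (sq B y y).re < γ * nrm y := by
    calc _ < γ ^ 2 * (γ⁻¹ * nrm y) := by gcongr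
      _ = _ := by field_simp
  unfold nrm at *
  linarith

lemma NIq.inf_le {G : Matrix (Fin n) (Fin n) RH} (h : NIq G) (w : Fin n → ℂ) :
    (sq (mI G) w w).re ≤ (sq (mv G 0) w w).re := by
  have := pick h 1 (by simp) 0 w
  simp [sq] at this
  simpa [sq] using this

lemma sufficiency (P C : Matrix (Fin n) (Fin n) RH) (γ : ℝ) (hγ : 0 < γ)
    (hP : ∀ ω : ℝ, 0 < ω → ∀ u, u ≠ 0 → (sq (mv P (jw ω)) u u).im < 0)
    (hP0 : ∀ y, (sq (mv P 0) y y).re ≤ γ * nrm y)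
    (hC : NIq C)
    (hC0 : ∀ y, y ≠ 0 → (sq (mv C 0) y y).re < γ⁻¹ * nrm y)
    (hCI : ∀ u, 0 ≤ (sq (mI C) u u).re) : FeedbackStable (un P) (un C) := by
  have hPN : NIq P := by
    intro ω hω u
    by_cases hu : u = 0
    · subst hu; simp [sq]
    · exact (hP ω hω u hu).le
  rw [fb_iff']
  refine ⟨fun s hs => ?_, ?_⟩
  · rcases hs.eq_or_lt with hs0 | hs
    · obtain ⟨ω, rfl⟩ : ∃ ω : ℝ, s = jw ω := ⟨s.im, by apply Complex.ext <;> simp [jw, ← hs0]⟩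
      rcases lt_trichotomy ω 0 with hω | rfl | hω
      · apply det_ne
        intro x y hy h1 h2
        have a1 := hC (-ω) (by linarith) (star x)
        have a2 := hP (-ω) (by linarith) (star y) (by simpa using hy)
        have b1 := sq_mv_neg C (-ω) x
        have b2 := sq_mv_neg P (-ω) y
        rw [neg_neg] at b1 b2
        rw [sq_eq_dot h1] at b1
        rw [sq_eq_dot h2] at b2
        have : star y ⬝ᵥ x = star (star x ⬝ᵥ y) := by rw [star_dotProduct]
        rw [this, b1] at b2
        have b3 := congrArg Complex.im b2
        simp at b3
        linarith
      · have : jw 0 = 0 := by simp [jw]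
        rw [this]
        exact static_det _ _ γ hγ hP0 hC0 hC.zero fun u => (hCI u).trans (hC.inf_le u)
      · apply det_ne
        intro x y hy h1 h2
        have a1 := hC ω hω x
        have a2 := hP ω hω y hy
        rw [sq_eq_dot h1] at a1
        rw [sq_eq_dot h2] at a2
        have : star y ⬝ᵥ x = star (star x ⬝ᵥ y) := by rw [star_dotProduct]
        rw [this] at a2
        simp at a2
        linarith
    · apply det_ne
      intro x y hy h1 h2
      have p1 := pick hC s hs x ((-γ : ℂ) • y)
      have p2 := pick hPN s hs y ((-1 : ℂ) • y)
      have q := hCI (x + (-γ : ℂ) • y)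
      rw [re_quad _ hC.inf] at q
      have e2 := hP0 y
      have e4 : γ ^ 2 * (sq (mv C 0) y y).re < γ * nrm y := by
        calc _ < γ ^ 2 * (γ⁻¹ * nrm y) := by gcongr; exact hC0 y hy
          _ = _ := by field_simp
      simp only [sq_smul_left, sq_smul_right, sq_eq_dot h1, sq_eq_dot h2] at p1 p2
      have hz : star y ⬝ᵥ x = star (star x ⬝ᵥ y) := by rw [star_dotProduct]
      have i1 := hC.zero y
      have i2 := hC.inf y
      have i3 := hC.inf x
      have i4 := hPN.zero y
      have i5 := hPN.inf y
      rw [hz] at p2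
      simp [Complex.mul_re, i1, i2, i3, i4, i5] at p1 p2
      rw [dot_conj_re x y] at p2
      have hn : (star y ⬝ᵥ y).re = nrm y := rfl
      rw [hn] at p1
      have hneg : s.re * ((sq (mv P 0) y y).re - 2 * γ * nrm y + γ ^ 2 * (sq (mv C 0) y y).re
        - ((sq (mI C) x x).re - 2 * γ * (sq (mI C) y x).re + γ ^ 2 * (sq (mI C) y y).re)) < 0 := by
        apply mul_neg_of_pos_of_neg hs
        linarith
      nlinarith
  · exact static_det _ _ γ hγ (fun y => (hPN.inf_le y).trans (hP0 y))
      (fun y hy => (hC.inf_le y).trans_lt (hC0 y hy)) hC.inf hCI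

/-! ### Real and complex forms -/

/-- complexification -/
def cx (A : Matrix (Fin n) (Fin n) ℝ) : Matrix (Fin n) (Fin n) ℂ := A.map Complex.ofReal

/-- real part of a vector -/
def vre (u : Fin n → ℂ) : Fin n → ℝ := fun i => (u i).re

/-- imaginary part of a vector -/
def vim (u : Fin n → ℂ) : Fin n → ℝ := fun i => (u i).im

/-- complexification of a vector -/
def vcx (x : Fin n → ℝ) : Fin n → ℂ := fun i => (x i : ℂ)

lemma vcx_ne {x : Fin n → ℝ} (hx : x ≠ 0) : vcx x ≠ 0 := by
  intro h
  apply hx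
  funext i
  have := congrFun h i
  simpa [vcx] using this

lemma cx_re (A : Matrix (Fin n) (Fin n) ℝ) (u : Fin n → ℂ) :
    (sq (cx A) u u).re = vre u ⬝ᵥ A *ᵥ vre u + vim u ⬝ᵥ A *ᵥ vim u := by
  rw [sq_sum]
  simp only [dotProduct, mulVec, Finset.mul_sum, Complex.re_sum, ← Finset.sum_add_distrib]
  refine Finset.sum_congr rfl fun i _ => Finset.sum_congr rfl fun j _ => ?_
  simp [cx, vre, vim, Complex.mul_re]
  ring

lemma cx_vcx (A : Matrix (Fin n) (Fin n) ℝ) (x : Fin n → ℝ) :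
    (sq (cx A) (vcx x) (vcx x)).re = x ⬝ᵥ A *ᵥ x := by
  have h1 : vre (vcx x) = x := by funext i; simp [vre, vcx]
  have h2 : vim (vcx x) = 0 := by funext i; simp [vim, vcx]
  rw [cx_re, h1, h2]; simp

lemma nrm_eq (u : Fin n → ℂ) : nrm u = vre u ⬝ᵥ vre u + vim u ⬝ᵥ vim u := by
  unfold nrm
  simp only [dotProduct, Complex.re_sum, ← Finset.sum_add_distrib]
  refine Finset.sum_congr rfl fun i _ => ?_
  simp [vre, vim]

lemma nrm_nonneg (u : Fin n → ℂ) : 0 ≤ nrm u := by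
  rw [nrm_eq]
  simp only [dotProduct]
  exact add_nonneg (Finset.sum_nonneg fun i _ => mul_self_nonneg _)
    (Finset.sum_nonneg fun i _ => mul_self_nonneg _)

lemma nrm_zero {u : Fin n → ℂ} (h : nrm u = 0) : u = 0 := by
  rw [nrm_eq] at h
  simp only [dotProduct, ← Finset.sum_add_distrib] at h
  rw [Finset.sum_eq_zero_iff_of_nonneg
    (fun i _ => add_nonneg (mul_self_nonneg _) (mul_self_nonneg _))] at h
  funext i
  have := h i (Finset.mem_univ i)
  simp only [vre, vim] at this
  apply Complex.ext
  · simp; nlinarith [mul_self_nonneg (u i).re, mul_self_nonneg (u i).im]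
  · simp; nlinarith [mul_self_nonneg (u i).re, mul_self_nonneg (u i).im]

lemma nrm_pos {u : Fin n → ℂ} (h : u ≠ 0) : 0 < nrm u :=
  lt_of_le_of_ne (nrm_nonneg u) fun h' => h (nrm_zero h'.symm)

lemma cx_smul_one (c : ℝ) (u : Fin n → ℂ) :
    (sq (cx (c • (1 : Matrix (Fin n) (Fin n) ℝ))) u u) = c * (star u ⬝ᵥ u) := by
  have : cx (c • (1 : Matrix (Fin n) (Fin n) ℝ)) = (c : ℂ) • 1 := by
    ext i j; by_cases hij : i = j <;> simp [cx, Matrix.one_apply, hij]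
  rw [this, sq_smul]
  simp [sq]

lemma dot_self_im (u : Fin n → ℂ) : (star u ⬝ᵥ u).im = 0 := by
  simp only [dotProduct, Complex.im_sum]
  refine Finset.sum_eq_zero fun i _ => ?_
  simp [mul_comm]

lemma cx_sub (A B : Matrix (Fin n) (Fin n) ℝ) : cx (A - B) = cx A - cx B := by
  ext i j; simp [cx]

lemma cx_symm {A : Matrix (Fin n) (Fin n) ℝ} (h : ∀ u, (sq (cx A) u u).im = 0) :
    A.IsHermitian := by
  ext i j
  have := re_symm (cx A) h (Pi.single j 1) (Pi.single i 1)
  simpa [sq, cx, Pi.star_single] using this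

lemma psd_of {A : Matrix (Fin n) (Fin n) ℝ} (h : ∀ u, (sq (cx A) u u).im = 0)
    (h2 : ∀ u, 0 ≤ (sq (cx A) u u).re) : A.PosSemidef := by
  rw [posSemidef_iff_dotProduct_mulVec]
  refine ⟨cx_symm h, fun x => ?_⟩
  have := h2 (vcx x)
  rw [cx_vcx] at this
  simpa using this

lemma re_of_psd {A : Matrix (Fin n) (Fin n) ℝ} (h : A.PosSemidef) (u : Fin n → ℂ) :
    0 ≤ (sq (cx A) u u).re := by
  rw [posSemidef_iff_dotProduct_mulVec] at h
  rw [cx_re]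
  have h1 := h.2 (vre u)
  have h2 := h.2 (vim u)
  simp at h1 h2
  linarith

lemma re_of_pd {A : Matrix (Fin n) (Fin n) ℝ} (h : A.PosDef) (u : Fin n → ℂ) (hu : u ≠ 0) :
    0 < (sq (cx A) u u).re := by
  have h0 := h.posSemidef
  rw [posDef_iff_dotProduct_mulVec] at h
  rw [posSemidef_iff_dotProduct_mulVec] at h0
  rw [cx_re]
  have h1 := h0.2 (vre u)
  have h2 := h0.2 (vim u)
  simp at h1 h2
  by_cases hr : vre u = 0
  · have hi : vim u ≠ 0 := by
      intro hi
      apply hu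
      funext i
      apply Complex.ext
      · exact congrFun hr i
      · exact congrFun hi i
    have := h.2 hi
    simp at this
    linarith
  · have := h.2 hr
    simp at this
    linarith

lemma pd_of {A : Matrix (Fin n) (Fin n) ℝ} (h : ∀ u, (sq (cx A) u u).im = 0)
    (h2 : ∀ u, u ≠ 0 → 0 < (sq (cx A) u u).re) : A.PosDef := by
  rw [posDef_iff_dotProduct_mulVec]
  refine ⟨cx_symm h, fun x hx => ?_⟩
  have := h2 (vcx x) (vcx_ne hx)
  rw [cx_vcx] at this
  simpa using this

lemma mv_zero (G : Matrix (Fin n) (Fin n) RH) : mv G 0 = cx (evalR (un G) 0) := by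
  ext i j
  simp only [mv, cx, evalR, un, evalC, RatFunc.eval, Matrix.of_apply, Matrix.map_apply]
  have h : ∀ p : ℝ[X], p.eval₂ (algebraMap ℝ ℂ) 0 = ((p.eval₂ (RingHom.id ℝ) 0 : ℝ) : ℂ) := by
    intro p
    have := Polynomial.hom_eval₂ p (RingHom.id ℝ) (algebraMap ℝ ℂ) 0
    simpa using this.symm
  rw [h, h]
  push_cast
  rfl

lemma mI_cx (G : Matrix (Fin n) (Fin n) RH) : mI G = cx (evalInf (un G)) := rfl

/-! ### Construction of plants -/

lemma mkRH (p q : ℝ[X]) (hd : p.degree ≤ q.degree)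
    (hs : ∀ s : ℂ, 0 ≤ s.re → q.eval₂ (algebraMap ℝ ℂ) s ≠ 0) :
    ∃ g : RH, ∀ s : ℂ, 0 ≤ s.re →
      evalC g s = p.eval₂ (algebraMap ℝ ℂ) s / q.eval₂ (algebraMap ℝ ℂ) s := by
  have hq : q ≠ 0 := by
    rintro rfl
    exact hs 0 (by simp) (by simp)
  exact ⟨⟨_, RHs_mk _ p q hq hd hs rfl⟩, fun s h => evalC_mk _ p q hq s (hs s h) rfl⟩

/-- constants -/
def cRH (c : ℝ) : RH := ⟨RatFunc.C c, RHs_C c⟩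

lemma ev_cRH (c : ℝ) (s : ℂ) (hs : 0 ≤ s.re) : ev s hs (cRH c) = c := by
  simp [ev_apply, cRH, evalC]

lemma evInf_cRH (c : ℝ) : evInf (cRH c) = c := by
  rw [evInf_apply]
  congr 1
  by_cases hc : c = 0
  · subst hc; simp [cRH, atInfinity]
  · simp [cRH, atInfinity, Polynomial.degree_C hc]

/-- two-term plant -/
def pl (g1 g2 : RH) (X Y : Matrix (Fin n) (Fin n) ℝ) : Matrix (Fin n) (Fin n) RH :=
  Matrix.of fun i j => g1 * cRH (X i j) + g2 * cRH (Y i j)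

lemma mv_pl (g1 g2 : RH) (X Y : Matrix (Fin n) (Fin n) ℝ) (s : ℂ) (hs : 0 ≤ s.re) :
    mv (pl g1 g2 X Y) s = evalC g1 s • cx X + evalC g2 s • cx Y := by
  rw [mv_eq _ s hs]
  ext i j
  have : ev s hs (pl g1 g2 X Y i j) = ev s hs g1 * X i j + ev s hs g2 * Y i j := by
    simp only [pl, Matrix.of_apply, map_add, map_mul, ev_cRH]
  simpa [cx, ev_apply] using this

lemma mI_pl (g1 g2 : RH) (X Y : Matrix (Fin n) (Fin n) ℝ) :
    mI (pl g1 g2 X Y) = evInf g1 • cx X + evInf g2 • cx Y := by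
  rw [mI_eq]
  ext i j
  simp [pl, evInf_cRH, cx]

lemma sq_add (M N : Matrix (Fin n) (Fin n) ℂ) (x y : Fin n → ℂ) :
    sq (M + N) x y = sq M x y + sq N x y := by
  simp [sq, add_mulVec, dotProduct_add]

lemma dot_star (x y : Fin n → ℂ) : star y ⬝ᵥ x = star (star x ⬝ᵥ y) := by
  rw [star_dotProduct]

lemma dot_self (y : Fin n → ℂ) : star y ⬝ᵥ y = (nrm y : ℂ) := by
  apply Complex.ext
  · rfl
  · simpa using dot_self_im y

lemma proj_nrm (y u : Fin n → ℂ) (hy : y ≠ 0) :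
    nrm (u - ((star y ⬝ᵥ u) / nrm y) • y) = nrm u - Complex.normSq (star y ⬝ᵥ u) / nrm y := by
  have hn : (nrm y : ℂ) ≠ 0 := by exact_mod_cast (nrm_pos hy).ne'
  have : (nrm (u - ((star y ⬝ᵥ u) / nrm y) • y) : ℂ)
      = ((nrm u - Complex.normSq (star y ⬝ᵥ u) / nrm y : ℝ) : ℂ) := by
    rw [← dot_self]
    push_cast
    rw [star_sub, star_smul, sub_dotProduct, dotProduct_sub, dotProduct_sub, smul_dotProduct,
      smul_dotProduct, dotProduct_smul, dotProduct_smul, dot_self, dot_self, dot_star y u,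
      Complex.normSq_eq_conj_mul_self]
    simp only [smul_eq_mul, star_div₀, RCLike.star_def, Complex.conj_ofReal]
    field_simp
    ring
  exact_mod_cast this

lemma cs (y u : Fin n → ℂ) : Complex.normSq (star y ⬝ᵥ u) ≤ nrm y * nrm u := by
  by_cases hy : y = 0
  · subst hy; simp [nrm]
  have h := proj_nrm y u hy
  have h1 := nrm_nonneg (u - ((star y ⬝ᵥ u) / nrm y) • y)
  have h2 := nrm_pos hy
  rw [h, sub_nonneg, div_le_iff₀ h2] at h1
  linarith

lemma exQ (y v : Fin n → ℂ) (h : star y ⬝ᵥ v = 1) :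
    ∃ Q : Matrix (Fin n) (Fin n) ℂ, ∃ K : ℝ, 0 < K ∧ Q *ᵥ y = v ∧ (∀ u, (sq Q u u).im = 0) ∧
      (∀ u, u ≠ 0 → 0 < (sq Q u u).re) ∧ ∀ u, (sq Q u u).re ≤ K * nrm u := by
  have hy : y ≠ 0 := by rintro rfl; simp at h
  have hn0 := nrm_pos hy
  have hn : (nrm y : ℂ) ≠ 0 := by exact_mod_cast hn0.ne'
  have hvy : star v ⬝ᵥ y = 1 := by rw [dot_star, h]; simp
  let Q : Matrix (Fin n) (Fin n) ℂ := vecMulVec v (star v) + 1 - (nrm y : ℂ)⁻¹ • vecMulVec y (star y)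
  have key : ∀ u, sq Q u u = ((Complex.normSq (star v ⬝ᵥ u)
      + nrm (u - ((star y ⬝ᵥ u) / nrm y) • y) : ℝ) : ℂ) := by
    intro u
    rw [proj_nrm y u hy]
    simp only [Q, sq_sub, sq_add, sq_smul]
    simp only [sq, vecMulVec_mulVec, one_mulVec, op_smul_eq_smul, dotProduct_smul,
      dot_self]
    push_cast
    rw [dot_star v u, dot_star y u, Complex.normSq_eq_conj_mul_self, Complex.normSq_eq_conj_mul_self]
    simp only [smul_eq_mul, RCLike.star_def]
    field_simp
    ring
  refine ⟨Q, nrm v + 1, by linarith [nrm_nonneg v], ?_, ?_, ?_, ?_⟩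
  · simp only [Q, sub_mulVec, add_mulVec, vecMulVec_mulVec, one_mulVec, hvy, smul_mulVec, dot_self,
      op_smul_eq_smul, smul_smul, inv_mul_cancel₀ hn, one_smul]
    simp
  · intro u; rw [key]; simp
  · intro u hu
    rw [key, Complex.ofReal_re]
    have h1 := Complex.normSq_nonneg (star v ⬝ᵥ u)
    have h2 := nrm_nonneg (u - ((star y ⬝ᵥ u) / nrm y) • y)
    refine lt_of_le_of_ne (add_nonneg h1 h2) fun h0 => hu ?_
    have h3 := nrm_zero (show nrm (u - ((star y ⬝ᵥ u) / nrm y) • y) = 0 by linarith)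
    have h4 : Complex.normSq (star v ⬝ᵥ u) = 0 := by linarith
    rw [Complex.normSq_eq_zero] at h4
    rw [sub_eq_zero] at h3
    have h5 := h4
    rw [h3, dotProduct_smul, hvy] at h5
    rw [h3]
    simp only [smul_eq_mul, mul_one] at h5
    rw [h5, zero_smul]
  · intro u
    rw [key, Complex.ofReal_re, proj_nrm y u hy]
    have h1 := cs v u
    have h2 : 0 ≤ Complex.normSq (star y ⬝ᵥ u) / nrm y := div_nonneg (Complex.normSq_nonneg _) hn0.le
    linarith

lemma cxX (Q : Matrix (Fin n) (Fin n) ℂ) : cx (Q.map Complex.re) = (2⁻¹ : ℂ) • (Q + Q.map star) := by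
  ext i j
  simp only [cx, Matrix.map_apply, Matrix.smul_apply, Matrix.add_apply]
  apply Complex.ext <;> simp
  ring

lemma cxY (Q : Matrix (Fin n) (Fin n) ℂ) :
    Complex.I • cx (Q.map Complex.im) = (2⁻¹ : ℂ) • (Q - Q.map star) := by
  ext i j
  simp only [cx, Matrix.map_apply, Matrix.smul_apply, Matrix.sub_apply]
  apply Complex.ext <;> simp
  ring

/-! ### Necessity -/

/-- condition (ii) in terms of quadratic forms -/
def Robust (C : Matrix (Fin n) (Fin n) RH) (γ : ℝ) : Prop :=
  ∀ P : Matrix (Fin n) (Fin n) RH,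
    (∀ ω : ℝ, 0 < ω → ∀ u, u ≠ 0 → (sq (mv P (jw ω)) u u).im < 0) →
    (∀ u, 0 ≤ (sq (mv P 0) u u).re) → (∀ u, (sq (mv P 0) u u).re ≤ γ * nrm u) →
    FeedbackStable (un P) (un C)

lemma det_zero (A B : Matrix (Fin n) (Fin n) ℂ) (x y : Fin n → ℂ) (hx : x ≠ 0)
    (h1 : B *ᵥ x = y) (h2 : A *ᵥ y = x) : (1 - A * B).det = 0 := by
  apply Matrix.exists_mulVec_eq_zero_iff.1
  refine ⟨x, hx, ?_⟩
  rw [sub_mulVec, one_mulVec, ← mulVec_mulVec, h1, h2, sub_self]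

lemma quad_ne (ε q : ℝ) (hε : 0 < ε) (hq : 0 < q) (s : ℂ) (hs : 0 ≤ s.re) :
    s ^ 2 + ε * s + q ≠ 0 := by
  intro h
  have hr := congrArg Complex.re h
  have hi := congrArg Complex.im h
  simp [sq, pow_two] at hr hi
  have hb : s.im * (2 * s.re + ε) = 0 := by linarith
  rcases mul_eq_zero.1 hb with hb | hb
  · rw [hb] at hr
    nlinarith [mul_nonneg hε.le hs, mul_self_nonneg s.re]
  · linarith

lemma exists_g (p : ℝ[X]) (hp : p.degree ≤ 2) (ε q : ℝ) (hε : 0 < ε) (hq : 0 < q) :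
    ∃ g : RH, ∀ s : ℂ, 0 ≤ s.re →
      evalC g s = p.eval₂ (algebraMap ℝ ℂ) s / (s ^ 2 + ε * s + q) := by
  obtain ⟨g, hg⟩ := mkRH p (X ^ 2 + Polynomial.C ε * X + Polynomial.C q) (by
      have : (X ^ 2 + Polynomial.C ε * X + Polynomial.C q : ℝ[X]).degree = 2 := by compute_degree!
      rw [this]; exact hp) (by
      intro s hs
      simpa using quad_ne ε q hε hq s hs)
  refine ⟨g, fun s hs => ?_⟩
  rw [hg s hs]
  simp

lemma sq_bar (Q : Matrix (Fin n) (Fin n) ℂ) (hI : ∀ u, (sq Q u u).im = 0) (u : Fin n → ℂ) :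
    sq (Q.map star) u u = ((sq Q (star u) (star u)).re : ℂ) := by
  rw [sq_conj]
  have := hI (star u)
  apply Complex.ext <;> simp [this]

lemma sq_real (Q : Matrix (Fin n) (Fin n) ℂ) (hI : ∀ u, (sq Q u u).im = 0) (u : Fin n → ℂ) :
    sq Q u u = ((sq Q u u).re : ℂ) := by
  apply Complex.ext <;> simp [hI u]

lemma nrm_star (u : Fin n → ℂ) : nrm (star u) = nrm u := by
  rw [nrm_eq, nrm_eq]
  simp [vre, vim, dotProduct]

lemma sqX (Q : Matrix (Fin n) (Fin n) ℂ) (hI : ∀ u, (sq Q u u).im = 0) (u : Fin n → ℂ) :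
    sq (cx (Q.map Complex.re)) u u = ((((sq Q u u).re + (sq Q (star u) (star u)).re) / 2 : ℝ) : ℂ) := by
  rw [cxX, sq_smul, sq_add, sq_bar Q hI, sq_real Q hI u]
  push_cast
  simp only [Complex.ofReal_re]
  ring

lemma sqY (Q : Matrix (Fin n) (Fin n) ℂ) (hI : ∀ u, (sq Q u u).im = 0) (u : Fin n → ℂ) :
    Complex.I * sq (cx (Q.map Complex.im)) u u
      = ((((sq Q u u).re - (sq Q (star u) (star u)).re) / 2 : ℝ) : ℂ) := by
  rw [← sq_smul, cxY, sq_smul, sq_sub, sq_bar Q hI, sq_real Q hI u]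
  push_cast
  simp only [Complex.ofReal_re]
  ring

lemma Robust.ni {C : Matrix (Fin n) (Fin n) RH} {γ : ℝ} (hγ : 0 < γ) (H : Robust C γ) : NIq C := by
  intro w hw x
  by_contra hneg
  push Not at hneg
  set y := mv C (jw w) *ᵥ x with hy
  set z : ℂ := star x ⬝ᵥ y with hz
  have hzi : 0 < z.im := hneg
  have hz0 : z ≠ 0 := by
    intro h; rw [h] at hzi; simp at hzi
  have hcz : star z ≠ 0 := by simpa using hz0
  have hx : x ≠ 0 := by
    intro h; apply hz0; rw [hz, h]; simp
  have hN : 0 < Complex.normSq z := Complex.normSq_pos.2 hz0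
  obtain ⟨Q, K, hK, hQy, hQI, hQp, hQK⟩ := exQ y ((star z)⁻¹ • x) (by
    rw [dotProduct_smul, dot_star, smul_eq_mul, ← hz, inv_mul_cancel₀ hcz])
  set r : ℝ := 2 * w ^ 2 * z.re / Complex.normSq z with hr
  obtain ⟨t, ht, ht1, ht2⟩ : ∃ t : ℝ, 0 < t ∧ t * |r| ≤ w ^ 2 / 2 ∧ 2 * t * K ≤ γ := by
    refine ⟨min (w ^ 2 / 2 / (|r| + 1)) (γ / (2 * K)), by positivity, ?_, ?_⟩
    · calc _ ≤ (w ^ 2 / 2 / (|r| + 1)) * (|r| + 1) := by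
            gcongr
            · exact min_le_left _ _
            · linarith
        _ = _ := by field_simp
    · calc _ ≤ 2 * (γ / (2 * K)) * K := by
            gcongr
            exact min_le_right _ _
        _ = _ := by field_simp
  set q : ℝ := w ^ 2 + t * r with hq
  set e : ℝ := 2 * w * t * z.im / Complex.normSq z with he
  have hqge : w ^ 2 / 2 ≤ q := by
    have := abs_le.1 (le_refl |t * r|)
    rw [abs_mul, abs_of_pos ht] at this
    linarith [this.1]
  have hq0 : 0 < q := lt_of_lt_of_le (by positivity) hqge
  have he0 : 0 < e := by positivity
  obtain ⟨g1, hg1⟩ := exists_g (Polynomial.C (t * w ^ 2) - Polynomial.C t * X ^ 2) (by compute_degree)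
    e q he0 hq0
  obtain ⟨g2, hg2⟩ := exists_g (Polynomial.C (2 * t * w) * X) (by
    compute_degree
    norm_num) e q he0 hq0
  have hd : ∀ ω : ℝ, jw ω ^ 2 + e * jw ω + q ≠ 0 := fun ω => quad_ne e q he0 hq0 _ (by simp [jw])
  set P := pl g1 g2 (Q.map Complex.re) (Q.map Complex.im) with hP
  have hPv : ∀ ω : ℝ, mv P (jw ω) = ((t / (jw ω ^ 2 + e * jw ω + q) : ℂ)) •
      (((w ^ 2 + ω ^ 2 : ℝ) : ℂ) • cx (Q.map Complex.re)
        + ((2 * w * ω : ℝ) : ℂ) • Complex.I • cx (Q.map Complex.im)) := by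
    intro ω
    rw [hP, mv_pl _ _ _ _ _ (by simp [jw]), hg1 _ (by simp [jw]), hg2 _ (by simp [jw]), smul_add,
      smul_smul, smul_smul, smul_smul]
    have hd' := hd ω
    congr 2
    · rw [div_mul_eq_mul_div]
      congr 1
      simp [jw, mul_pow]
      ring
    · rw [div_mul_eq_mul_div, div_mul_eq_mul_div]
      congr 1
      simp [jw]
      ring
  have hSNI : ∀ ω : ℝ, 0 < ω → ∀ u, u ≠ 0 → (sq (mv P (jw ω)) u u).im < 0 := by
    intro ω hω u hu
    have hA := hQp u hu
    have hB := hQp (star u) (by simpa using hu)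
    have : sq (mv P (jw ω)) u u = ((t * ((w + ω) ^ 2 * (sq Q u u).re
        + (w - ω) ^ 2 * (sq Q (star u) (star u)).re) / 2 : ℝ) : ℂ) / (jw ω ^ 2 + e * jw ω + q) := by
      rw [hPv, sq_smul, sq_add, sq_smul, sq_smul, sq_smul, sqX Q hQI, sqY Q hQI, div_mul_eq_mul_div]
      congr 1
      push_cast
      ring
    rw [this]
    have hnum : 0 < t * ((w + ω) ^ 2 * (sq Q u u).re
        + (w - ω) ^ 2 * (sq Q (star u) (star u)).re) / 2 := by positivity
    have hdi : (jw ω ^ 2 + e * jw ω + q).im = e * ω := by simp [jw, pow_two]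
    rw [Complex.div_im, hdi, Complex.ofReal_im, Complex.ofReal_re]
    have hns := Complex.normSq_pos.2 (hd ω)
    have : 0 < t * ((w + ω) ^ 2 * (sq Q u u).re
        + (w - ω) ^ 2 * (sq Q (star u) (star u)).re) / 2 * (e * ω)
          / Complex.normSq (jw ω ^ 2 + e * jw ω + q) := by positivity
    simp only [zero_mul, zero_div, zero_sub]
    linarith
  have hP0 : ∀ u, (sq (mv P 0) u u).re
      = t * w ^ 2 / q * (((sq Q u u).re + (sq Q (star u) (star u)).re) / 2) := by
    intro u
    have h0 : jw 0 = 0 := by simp [jw]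
    have := hPv 0
    rw [h0] at this
    rw [this, sq_smul, sq_add, sq_smul, sq_smul, sqX Q hQI]
    have h2 : ((t : ℂ) / (0 ^ 2 + e * 0 + q)) = ((t / q : ℝ) : ℂ) := by push_cast; simp
    rw [h2]
    simp [← Complex.ofReal_pow]
    ring
  have hQnn : ∀ u, 0 ≤ (sq Q u u).re := by
    intro u
    by_cases hu : u = 0
    · subst hu; simp [sq]
    · exact (hQp u hu).le
  have hst := H P hSNI (fun u => by
      rw [hP0]
      have := hQnn u
      have := hQnn (star u)
      positivity) (fun u => by
      rw [hP0]
      have h1 := hQK u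
      have h2 := hQK (star u)
      rw [nrm_star] at h2
      have h3 : t * w ^ 2 / q ≤ 2 * t := by
        rw [div_le_iff₀ hq0]
        nlinarith
      have hn := nrm_nonneg u
      calc _ ≤ t * w ^ 2 / q * (K * nrm u) := by
            gcongr
            linarith
        _ ≤ 2 * t * (K * nrm u) := by gcongr
        _ = (2 * t * K) * nrm u := by ring
        _ ≤ _ := by gcongr)
  rw [fb_iff'] at hst
  refine hst.1 (jw w) (by simp [jw]) (det_zero _ _ x y hx rfl ?_)
  have hPw : mv P (jw w) = star z • Q := by
    rw [hPv, cxX, cxY, smul_smul, smul_smul, ← smul_smul, ← smul_smul]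
    have hQQ : (((w ^ 2 + w ^ 2 : ℝ) : ℂ) • (2⁻¹ : ℂ) • (Q + Q.map star)
        + ((2 * w * w : ℝ) : ℂ) • (2⁻¹ : ℂ) • (Q - Q.map star)) = (2 * w ^ 2 : ℂ) • Q := by
      ext i j
      simp
      ring
    rw [hQQ, smul_smul]
    congr 1
    have hdz : jw w ^ 2 + e * jw w + q = 2 * w ^ 2 * t / star z := by
      rw [eq_div_iff hcz]
      have hNN : z.re * z.re + z.im * z.im = Complex.normSq z := rfl
      apply Complex.ext
      · simp [jw, pow_two, hq, he, hr]
        field_simp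
        rw [← hNN]
        ring
      · simp [jw, pow_two, hq, he, hr]
        field_simp
        ring
    rw [hdz]
    have hw' : (w : ℂ) ≠ 0 := by exact_mod_cast hw.ne'
    have ht' : (t : ℂ) ≠ 0 := by exact_mod_cast ht.ne'
    field_simp
  rw [hPw, smul_mulVec, hQy, smul_smul, mul_inv_cancel₀ hcz, one_smul]

lemma exists_h1 : ∃ g : RH, ∀ s : ℂ, 0 ≤ s.re → evalC g s = 1 / (s + 1) := by
  obtain ⟨g, hg⟩ := mkRH 1 (X + Polynomial.C 1) (by rw [degree_X_add_C]; simp) (by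
    intro s hs h
    have := congrArg Complex.re h
    simp at this
    linarith)
  exact ⟨g, fun s hs => by rw [hg s hs]; simp⟩

lemma h1_im (ω : ℝ) : (1 / (jw ω + 1)).im = - ω / (1 + ω ^ 2) := by
  rw [Complex.div_im]
  simp [jw, Complex.normSq_apply]
  ring

lemma h1_inf (g : RH) (hg : ∀ s : ℂ, 0 ≤ s.re → evalC g s = 1 / (s + 1)) : evInf g = 0 := by
  rw [evInf_apply]
  refine tendsto_nhds_unique (tendsto_inf_real g) ?_
  have h1 : Tendsto (fun x : ℝ => ((1 / (x + 1) : ℝ) : ℂ)) atTop (𝓝 ((0 : ℝ) : ℂ)) := by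
    refine (Complex.continuous_ofReal.tendsto _).comp ?_
    exact tendsto_const_nhds.div_atTop (tendsto_atTop_add_const_right _ _ tendsto_id)
  rw [Complex.ofReal_zero] at h1
  refine h1.congr' ?_
  filter_upwards [eventually_ge_atTop 0] with x hx
  rw [hg x (by simpa using hx)]
  simp

lemma Robust.inf {C : Matrix (Fin n) (Fin n) RH} {γ : ℝ} (hγ : 0 < γ) (H : Robust C γ)
    (u : Fin n → ℂ) : 0 ≤ (sq (mI C) u u).re := by
  by_contra hneg
  push Not at hneg
  have hNI := H.ni hγ
  obtain ⟨x, hx⟩ : ∃ x : Fin n → ℝ, (sq (mI C) (vcx x) (vcx x)).re < 0 := by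
    by_contra hcon
    push Not at hcon
    rw [mI_cx, cx_re, ← cx_vcx, ← cx_vcx, ← mI_cx] at hneg
    linarith [hcon (vre u), hcon (vim u)]
  set y := mI C *ᵥ vcx x with hy
  set z := (sq (mI C) (vcx x) (vcx x)).re with hz
  have hzz : star (vcx x) ⬝ᵥ y = (z : ℂ) := sq_real _ hNI.inf (vcx x)
  have hz0 : (z : ℂ) ≠ 0 := by exact_mod_cast hx.ne
  have hx0 : vcx x ≠ 0 := by
    intro h; rw [h] at hzz; simp at hzz; exact hz0 (by exact_mod_cast hzz.symm)
  have hsx : star (vcx x) = vcx x := by funext i; simp [vcx]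
  have hsy : star y = y := by
    funext i
    simp only [hy, mI_cx, cx, mulVec, dotProduct, Pi.star_apply, star_sum]
    refine Finset.sum_congr rfl fun j _ => by simp [vcx, mul_comm]
  obtain ⟨Q, K, hK, hQy, hQI, hQp, hQK⟩ := exQ y ((z : ℂ)⁻¹ • vcx x) (by
    rw [dotProduct_smul, dot_star, hzz]
    simp [hz0])
  obtain ⟨h, hh⟩ := exists_h1
  set P := pl (cRH z * (1 - h)) 0 (Q.map Complex.re) 0 with hP
  have hPv : ∀ s : ℂ, 0 ≤ s.re → mv P s = (z * (1 - 1 / (s + 1)) : ℂ) • cx (Q.map Complex.re) := by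
    intro s hs
    rw [hP, mv_pl _ _ _ _ _ hs, ← ev_apply s hs, ← ev_apply s hs, map_mul, map_sub, map_one,
      map_zero, ev_cRH, ev_apply, hh s hs, zero_smul, add_zero]
  have hPI : mI P = (z : ℂ) • cx (Q.map Complex.re) := by
    rw [hP, mI_pl, map_mul, map_sub, map_one, map_zero, evInf_cRH, h1_inf h hh]
    simp
  have hP0 : mv P 0 = 0 := by rw [hPv 0 (by simp)]; simp
  have hst := H P (by
    intro ω hω v hv
    rw [hPv _ (by simp [jw]), sq_smul, sqX Q hQI]
    have hA := hQp v hv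
    have hB := hQp (star v) (by simpa using hv)
    have hi := h1_im ω
    rw [Complex.im_mul_ofReal, Complex.im_ofReal_mul, Complex.sub_im, hi, Complex.one_im]
    have h2 : 0 < ω / (1 + ω ^ 2) * (((sq Q v v).re + (sq Q (star v) (star v)).re) / 2) := by positivity
    have h3 : z * (0 - -ω / (1 + ω ^ 2)) * (((sq Q v v).re + (sq Q (star v) (star v)).re) / 2)
      = z * (ω / (1 + ω ^ 2) * (((sq Q v v).re + (sq Q (star v) (star v)).re) / 2)) := by ring
    rw [h3]
    exact mul_neg_of_neg_of_pos hx h2) (by simp [hP0, sq]) (by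
      intro v; simp [hP0, sq]
      exact mul_nonneg hγ.le (nrm_nonneg v))
  rw [fb_iff'] at hst
  refine hst.2 (det_zero _ _ (vcx x) y hx0 rfl ?_)
  have hQb : Q.map star *ᵥ y = (z : ℂ)⁻¹ • vcx x := by
    have : Q.map star *ᵥ y = star (Q *ᵥ y) := by
      conv_lhs => rw [← hsy]
      funext i
      simp [mulVec, dotProduct, mul_comm]
    rw [this, hQy, star_smul, hsx]
    simp
  rw [hPI, cxX, smul_mulVec, smul_mulVec, add_mulVec, hQy, hQb, ← two_smul ℂ, smul_smul, smul_smul,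
    smul_smul]
  have : (z : ℂ) * 2⁻¹ * 2 * (z : ℂ)⁻¹ = 1 := by field_simp
  first
    | rw [this, one_smul]
    | (rw [show (z : ℂ) * (2⁻¹ * (2 * (z : ℂ)⁻¹)) = 1 by field_simp, one_smul])

lemma Robust.zero {C : Matrix (Fin n) (Fin n) RH} {γ : ℝ} (hγ : 0 < γ) (H : Robust C γ) :
    LoewnerLT (evalR (un C) 0) (γ⁻¹ • 1) := by
  have hNI := H.ni hγ
  have hS : (γ⁻¹ • 1 - evalR (un C) 0).IsHermitian := by
    apply cx_symm
    intro u
    rw [cx_sub, sq_sub, ← mv_zero, cx_smul_one, Complex.sub_im, hNI.zero, dot_self]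
    simp
  unfold LoewnerLT
  rw [hS.posDef_iff_eigenvalues_pos]
  intro i
  by_contra hneg
  push Not at hneg
  have hv := hS.mulVec_eigenvectorBasis i
  set x : Fin n → ℝ := ⇑(hS.eigenvectorBasis i) with hx
  set l := hS.eigenvalues i with hl
  have hx0 : x ≠ 0 := by
    intro h
    apply hS.eigenvectorBasis.orthonormal.ne_zero i
    ext j
    exact congrFun h j
  set m := γ⁻¹ - l with hm
  have hm1 : γ⁻¹ ≤ m := by linarith
  have hm0 : 0 < m := lt_of_lt_of_le (by positivity) hm1
  have hCx : evalR (un C) 0 *ᵥ x = m • x := by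
    rw [sub_mulVec, smul_mulVec, one_mulVec] at hv
    rw [hm, sub_smul, ← hv]
    simp
  have hCx' : mv C 0 *ᵥ vcx x = (m : ℂ) • vcx x := by
    funext j
    have := congrArg (fun r : ℝ => (r : ℂ)) (congrFun hCx j)
    simp only [mulVec, dotProduct, Pi.smul_apply, smul_eq_mul] at this
    push_cast at this
    simpa [mv_zero, mulVec, dotProduct, cx, vcx] using this
  obtain ⟨h, hh⟩ := exists_h1
  set P := pl (cRH m⁻¹ * h) 0 ((1 : ℝ) • (1 : Matrix (Fin n) (Fin n) ℝ)) 0 with hP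
  have hPv : ∀ s : ℂ, 0 ≤ s.re → mv P s = ((m⁻¹ : ℝ) * (1 / (s + 1)) : ℂ) •
      cx ((1 : ℝ) • (1 : Matrix (Fin n) (Fin n) ℝ)) := by
    intro s hs
    rw [hP, mv_pl _ _ _ _ _ hs, ← ev_apply s hs, ← ev_apply s hs, map_mul,
      map_zero, ev_cRH, ev_apply, hh s hs, zero_smul, add_zero]
  have hPs : ∀ s : ℂ, 0 ≤ s.re → ∀ u, sq (mv P s) u u = ((m⁻¹ * nrm u : ℝ) : ℂ) * (1 / (s + 1)) := by
    intro s hs u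
    rw [hPv s hs, sq_smul, cx_smul_one, dot_self]
    push_cast
    ring
  have hP0 : ∀ u, (sq (mv P 0) u u).re = m⁻¹ * nrm u := by
    intro u
    rw [hPs 0 (by simp), Complex.re_ofReal_mul]
    simp
  have hst := H P (by
    intro ω hω v hv
    rw [hPs _ (by simp [jw]), Complex.im_ofReal_mul, h1_im]
    have := nrm_pos hv
    have h2 : 0 < m⁻¹ * nrm v * (ω / (1 + ω ^ 2)) := by positivity
    have h3 : m⁻¹ * nrm v * (-ω / (1 + ω ^ 2)) = - (m⁻¹ * nrm v * (ω / (1 + ω ^ 2))) := by ring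
    linarith) (by
      intro u; rw [hP0]
      have := nrm_nonneg u
      positivity) (by
      intro u; rw [hP0]
      have := nrm_nonneg u
      gcongr
      exact inv_le_of_inv_le₀ hγ hm1)
  rw [fb_iff'] at hst
  refine hst.1 0 (by simp) (det_zero _ _ (vcx x) _ (vcx_ne hx0) hCx' ?_)
  have h1 : cx ((1 : ℝ) • (1 : Matrix (Fin n) (Fin n) ℝ)) = 1 := by
    ext i j; by_cases hij : i = j <;> simp [cx, Matrix.one_apply, hij]
  have hm' : (m : ℂ) ≠ 0 := by exact_mod_cast hm0.ne'
  rw [hPv 0 (by simp), h1, smul_mulVec, one_mulVec, smul_smul]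
  rw [show ((m⁻¹ : ℝ) * (1 / (0 + 1)) * m : ℂ) = 1 by push_cast; field_simp; simp, one_smul]

/-- converse theorem for stable SNI uncertainty with bounded
static gain (no restriction on the plant instantaneous gain). -/
theorem converse_stable_SNI_instantaneous {n : ℕ} (C : Matrix (Fin n) (Fin n) (RatFunc ℝ)) (hC : MemRHinf C)
    (γ : ℝ) (hγ : 0 < γ) :
    ((∀ P : Matrix (Fin n) (Fin n) (RatFunc ℝ), IsSNI P → LoewnerLE (evalR P 0) (γ • 1) → FeedbackStable P C) ↔
     (∀ P : Matrix (Fin n) (Fin n) (RatFunc ℝ), IsSNI P → LoewnerLE 0 (evalR P 0) → LoewnerLE (evalR P 0) (γ • 1) →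
        FeedbackStable P C)) ∧
    ((∀ P : Matrix (Fin n) (Fin n) (RatFunc ℝ), IsSNI P → LoewnerLE (evalR P 0) (γ • 1) → FeedbackStable P C) ↔
     (IsNI C ∧ (evalInf C).PosSemidef ∧ LoewnerLT (evalR C 0) (γ⁻¹ • 1))) := by
  obtain ⟨C, rfl⟩ := exists_lift hC
  have h13 : (IsNI (un C) ∧ (evalInf (un C)).PosSemidef ∧ LoewnerLT (evalR (un C) 0) (γ⁻¹ • 1)) →
      (∀ P : Matrix (Fin n) (Fin n) (RatFunc ℝ), IsSNI P → LoewnerLE (evalR P 0) (γ • 1) →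
        FeedbackStable P (un C)) := by
    rintro ⟨hNI, hI, h0⟩ P hP hP0
    obtain ⟨P, rfl⟩ := exists_lift hP.1
    refine sufficiency P C γ hγ ?_ ?_ ?_ ?_ ?_
    · intro ω hω
      exact (niKer_pd _).1 (hP.2 ω hω)
    · intro y
      have := re_of_psd hP0 y
      rw [cx_sub, sq_sub, ← mv_zero, cx_smul_one, dot_self, Complex.sub_re, Complex.re_ofReal_mul,
        Complex.ofReal_re] at this
      linarith
    · intro ω hω
      refine (niKer_psd _).1 (hNI.2.2.1 ω hω ?_)
      rintro ⟨i, j, hij⟩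
      exact hC.2 (jw ω) (by simp [jw]) i j hij
    · intro y hy
      have := re_of_pd h0 y hy
      rw [cx_sub, sq_sub, ← mv_zero, cx_smul_one, dot_self, Complex.sub_re, Complex.re_ofReal_mul,
        Complex.ofReal_re] at this
      linarith
    · intro u
      exact re_of_psd hI u
  have h23 : (∀ P : Matrix (Fin n) (Fin n) (RatFunc ℝ), IsSNI P → LoewnerLE 0 (evalR P 0) →
        LoewnerLE (evalR P 0) (γ • 1) → FeedbackStable P (un C)) →
      (IsNI (un C) ∧ (evalInf (un C)).PosSemidef ∧ LoewnerLT (evalR (un C) 0) (γ⁻¹ • 1)) := by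
    intro h
    have H : Robust C γ := by
      intro P h1 h2 h3
      have hN : NIq P := by
        intro ω hω u
        by_cases hu : u = 0
        · subst hu; simp [sq]
        · exact (h1 ω hω u hu).le
      refine h (un P) ⟨memRHinf_un P, fun ω hω => (niKer_pd _).2 (h1 ω hω)⟩ ?_ ?_
      · unfold LoewnerLE
        rw [sub_zero]
        refine psd_of ?_ ?_
        · intro u; rw [← mv_zero]; exact hN.zero u
        · intro u; rw [← mv_zero]; exact h2 u
      · refine psd_of ?_ ?_
        · intro u
          rw [cx_sub, sq_sub, ← mv_zero, cx_smul_one, dot_self, Complex.sub_im, hN.zero u]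
          simp
        · intro u
          rw [cx_sub, sq_sub, ← mv_zero, cx_smul_one, dot_self, Complex.sub_re,
            Complex.re_ofReal_mul, Complex.ofReal_re]
          linarith [h3 u]
    have hN := H.ni hγ
    refine ⟨⟨hC.1, ?_, ?_, ?_, ?_⟩, ?_, H.zero hγ⟩
    · rintro s hs ⟨i, j, hij⟩
      exact hC.2 s hs.le i j hij
    · intro ω hω _
      exact (niKer_psd _).2 (hN ω hω)
    · rintro ω hω ⟨i, j, hij⟩
      exact absurd hij (hC.2 (jw ω) (by simp [jw]) i j)
    · rintro ⟨i, j, hij⟩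
      exact absurd hij (hC.2 0 (by simp) i j)
    · exact psd_of hN.inf (H.inf hγ)
  exact ⟨⟨fun h P hP _ h2 => h P hP h2, fun h => h13 (h23 h)⟩,
    ⟨fun h => h23 fun P hP _ h2 => h P hP h2, h13⟩⟩

end NIControl
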